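/- Let n ≥ 1 and let Ω ⊂ ℝⁿ be a bounded domain. Assume the standing hypotheses on f and V, with f moreover of class C² and convex on [0,∞), and with exponent p satisfying 1 < p < p_S. Let T > 0 and let u be a nonnegative classical solution of u_t = Δu + V(x)f(u) on (0,T)×Ω such that ∂_t u ≥ 0 everywhere. Let x₀ ∈ Ω satisfy V(x₀) = 0 and assume that the connected component of the zero set 𝒱₀ = {x ∈ closure(Ω) : V(x) = 0} containing x₀ does not intersect ∂Ω. Then x₀ is not a blowup point of u; that is, there exist r > 0 and M > 0 such that u(t,x) ≤ M for all t ∈ (T/2,T) and all x ∈ Ω with |x−x₀| < r. -/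

import Mathlib

open Set Metric Filter

noncomputable def lap {n : ℕ} (g : EuclideanSpace ℝ (Fin n) → ℝ)
    (x : EuclideanSpace ℝ (Fin n)) : ℝ :=
  ∑ i : Fin n, fderiv ℝ (fun y => fderiv ℝ g y (EuclideanSpace.single i 1)) x
    (EuclideanSpace.single i 1)

/-!
If `∂ₜu` vanishes identically, `u` does not depend on time. Otherwise the time difference quotients
of `u`, which are supersolutions of a linear parabolic equation, become positive by the strong
maximum principle, uniformly in the time step, on the support of a cutoff `χ` that equals `1` near
the component of `x₀` in the zero set of `V` and varies only where `V` is bounded away from zero.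
There the reaction `V f(u)` absorbs the errors caused by the cutoff in the Friedman–McLeod function
`∂ₜu - ε e⁻ᵗ χᵐ⁺² (f(u) + u ^ q)`, which therefore stays nonnegative. Hence `∂ₜu ≥ ε f(u)` near
`x₀`, and integration gives the type I rate `u ≤ A (T - t) ^ (-α)` with `α = 1 / (p - 1)`. Since
`V(x₀) = 0`, the reaction is negligible at this rate close to `x₀`, so that
`A (β (r² - |x - x₀|²)² + (T - t)) ^ (-α)` is a supersolution, and it stays bounded near `x₀`.
-/

section
open scoped Topology Gradient InnerProductSpace
open InnerProductSpace Laplacian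

variable {E : Type*} [NormedAddCommGroup E]

local notation "dim" => (Module.finrank ℝ E : ℝ)

section Laplacian

variable [InnerProductSpace ℝ E] {g h : E → ℝ} {x c : E}

lemma differentiableAt_fderiv (hg : ContDiffAt ℝ 2 g x) : DifferentiableAt ℝ (fderiv ℝ g) x :=
  (hg.fderiv_right (m := 1) (by norm_num)).differentiableAt (by norm_num)

lemma eventually_differentiableAt (hg : ContDiffAt ℝ 2 g x) :
    ∀ᶠ y in 𝓝 x, DifferentiableAt ℝ g y :=
  (hg.eventually (by simp)).mono fun _ hy => hy.differentiableAt (by norm_num)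

lemma hasFDerivAt_norm_sub_sq :
    HasFDerivAt (fun y : E => ‖y - c‖ ^ 2) ((2 : ℝ) • innerSL ℝ (x - c)) x := by
  simpa [ofNat_smul_eq_nsmul] using ((hasFDerivAt_id x).sub_const c).norm_sq

/-- The trick: were the second derivative negative, `s` would also be a local maximum, so the
function would be locally constant. -/
lemma deriv_deriv_nonneg_of_isLocalMin {φ : ℝ → ℝ} {s : ℝ} (hmin : IsLocalMin φ s)
    (hφ : ContinuousAt φ s) : 0 ≤ deriv (deriv φ) s := by
  by_contra! hneg
  have hconst : φ =ᶠ[𝓝 s] fun _ => φ s :=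
    (isLocalMax_of_deriv_deriv_neg hneg hmin.deriv_eq_zero hφ).and hmin |>.mono
      fun _ hr => le_antisymm hr.1 hr.2
  simp [hconst.deriv.deriv_eq] at hneg

lemma fderiv_fderiv_nonneg_of_isLocalMin (hg : ContDiffAt ℝ 2 g x) (hmin : IsLocalMin g x)
    (v : E) : 0 ≤ fderiv ℝ (fderiv ℝ g) x v v := by
  let ℓ : ℝ → E := fun s => x + s • v
  have hℓ (s : ℝ) : HasDerivAt ℓ v s := by
    simpa [ℓ] using ((hasDerivAt_id s).smul_const v).const_add x
  have hℓ₀ : ℓ 0 = x := by simp [ℓ]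
  have hℓ_tendsto : Tendsto ℓ (𝓝 0) (𝓝 x) := hℓ₀ ▸ (hℓ 0).continuousAt.tendsto
  have hderiv : deriv (fun s => g (ℓ s)) =ᶠ[𝓝 0] fun s => fderiv ℝ g (ℓ s) v := by
    filter_upwards [hℓ_tendsto.eventually (eventually_differentiableAt hg)] with s hs
    exact (hs.hasFDerivAt.comp_hasDerivAt s (hℓ s)).deriv
  have hderiv₂ : HasDerivAt (fun s => fderiv ℝ g (ℓ s) v) (fderiv ℝ (fderiv ℝ g) x v v) 0 := by
    have hcomp : HasDerivAt (fun s => fderiv ℝ g (ℓ s)) (fderiv ℝ (fderiv ℝ g) x v) 0 :=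
      (differentiableAt_fderiv hg).hasFDerivAt.comp_hasDerivAt_of_eq 0 (hℓ 0) hℓ₀.symm
    simpa using hcomp.clm_apply (hasDerivAt_const 0 v)
  rw [← hderiv₂.deriv, ← hderiv.deriv_eq]
  refine deriv_deriv_nonneg_of_isLocalMin ?_ ?_
  · simpa [IsLocalMin, IsMinFilter, hℓ₀] using hℓ_tendsto.eventually hmin
  · exact ContinuousAt.comp (by simpa [hℓ₀] using hg.continuousAt) (hℓ 0).continuousAt

variable [FiniteDimensional ℝ E]

lemma gradient_comp {φ : ℝ → ℝ} {φ' : ℝ} (hφ : HasDerivAt φ φ' (g x))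
    (hg : DifferentiableAt ℝ g x) : ∇ (fun y => φ (g y)) x = φ' • ∇ g x := by
  have hcomp : fderiv ℝ (fun y => φ (g y)) x = φ' • fderiv ℝ g x :=
    (hφ.comp_hasFDerivAt x hg.hasFDerivAt).fderiv
  simp [gradient, hcomp]

lemma gradient_norm_sub_sq : ∇ (fun y : E => ‖y - c‖ ^ 2) x = (2 : ℝ) • (x - c) := by
  refine ext_inner_right ℝ fun v => ?_
  rw [inner_gradient_left, hasFDerivAt_norm_sub_sq.fderiv]
  simp [inner_smul_left, inner_sub_left]

lemma laplacian_eq_sum_of_hasFDerivAt {ι : Type*} [Fintype ι] (b : OrthonormalBasis ι ℝ E)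
    {g' : E → E →L[ℝ] ℝ} {g'' : E →L[ℝ] E →L[ℝ] ℝ} (hg : ∀ᶠ y in 𝓝 x, HasFDerivAt g (g' y) y)
    (hg' : HasFDerivAt g' g'' x) : Δ g x = ∑ i, g'' (b i) (b i) := by
  have hfderiv : fderiv ℝ g =ᶠ[𝓝 x] g' := hg.mono fun y hy => hy.fderiv
  simp [laplacian_eq_iteratedFDeriv_orthonormalBasis g b, iteratedFDeriv_two_apply,
    hfderiv.fderiv_eq, hg'.fderiv]

lemma laplacian_eq_sum_fderiv_fderiv {ι : Type*} [Fintype ι] (b : OrthonormalBasis ι ℝ E)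
    (hg : ContDiffAt ℝ 2 g x) : Δ g x = ∑ i, fderiv ℝ (fderiv ℝ g) x (b i) (b i) :=
  laplacian_eq_sum_of_hasFDerivAt b
    ((eventually_differentiableAt hg).mono fun _ hy => hy.hasFDerivAt)
    (differentiableAt_fderiv hg).hasFDerivAt

lemma laplacian_add_const (hg : ContDiffAt ℝ 2 g x) (a : ℝ) :
    Δ (fun y => g y + a) x = Δ g x := by
  have hadd := hg.laplacian_add (contDiffAt_const (c := a))
  rwa [laplacian_const, Pi.zero_apply, add_zero] at hadd

lemma laplacian_mul (hg : ContDiffAt ℝ 2 g x) (hh : ContDiffAt ℝ 2 h x) :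
    Δ (fun y => g y * h y) x = g x * Δ h x + 2 * ⟪∇ g x, ∇ h x⟫_ℝ + h x * Δ g x := by
  have hmul : ∀ᶠ y in 𝓝 x,
      HasFDerivAt (fun y => g y * h y) (g y • fderiv ℝ h y + h y • fderiv ℝ g y) y := by
    filter_upwards [eventually_differentiableAt hg, eventually_differentiableAt hh] with y hgy hhy
    exact hgy.hasFDerivAt.mul hhy.hasFDerivAt
  let b := stdOrthonormalBasis ℝ E
  rw [laplacian_eq_sum_of_hasFDerivAt b hmul
    (((hg.differentiableAt (by norm_num)).hasFDerivAt.fun_smul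
      (differentiableAt_fderiv hh).hasFDerivAt).fun_add
    ((hh.differentiableAt (by norm_num)).hasFDerivAt.fun_smul
      (differentiableAt_fderiv hg).hasFDerivAt)),
    laplacian_eq_sum_fderiv_fderiv b hg, laplacian_eq_sum_fderiv_fderiv b hh,
    ← b.sum_inner_mul_inner]
  simp only [Finset.mul_sum, ← Finset.sum_add_distrib]
  refine Finset.sum_congr rfl fun i _ => ?_
  simp only [add_apply, smul_apply,
    ContinuousLinearMap.smulRight_apply, smul_eq_mul, inner_gradient_left, inner_gradient_right,
    conj_trivial]
  ring

lemma laplacian_comp {φ φ' : ℝ → ℝ} {φ'' : ℝ} (hφ : ∀ᶠ s in 𝓝 (g x), HasDerivAt φ (φ' s) s)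
    (hφ' : HasDerivAt φ' φ'' (g x)) (hg : ContDiffAt ℝ 2 g x) :
    Δ (fun y => φ (g y)) x = φ'' * ‖∇ g x‖ ^ 2 + φ' (g x) * Δ g x := by
  have hcomp : ∀ᶠ y in 𝓝 x, HasFDerivAt (fun y => φ (g y)) (φ' (g y) • fderiv ℝ g y) y := by
    filter_upwards [eventually_differentiableAt hg, hg.continuousAt.eventually hφ] with y hgy hφy
    exact hφy.comp_hasFDerivAt y hgy.hasFDerivAt
  have hφ'g : HasFDerivAt (fun y => φ' (g y)) (φ'' • fderiv ℝ g x) x :=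
    hφ'.comp_hasFDerivAt x (hg.differentiableAt (by norm_num)).hasFDerivAt
  let b := stdOrthonormalBasis ℝ E
  rw [laplacian_eq_sum_of_hasFDerivAt b hcomp
    (hφ'g.fun_smul (differentiableAt_fderiv hg).hasFDerivAt),
    laplacian_eq_sum_fderiv_fderiv b hg, ← b.sum_sq_norm_inner_left]
  simp only [Finset.mul_sum, ← Finset.sum_add_distrib]
  refine Finset.sum_congr rfl fun i _ => ?_
  simp only [add_apply, smul_apply,
    ContinuousLinearMap.smulRight_apply, smul_eq_mul, inner_gradient_left, Real.norm_eq_abs, sq_abs]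
  ring

lemma laplacian_norm_sub_sq : Δ (fun y : E => ‖y - c‖ ^ 2) x = 2 * dim := by
  have hfderiv : HasFDerivAt (fun y : E => (2 : ℝ) • innerSL ℝ (y - c))
      ((2 : ℝ) • (innerSL ℝ : E →L[ℝ] E →L[ℝ] ℝ)) x :=
    (((innerSL ℝ : E →L[ℝ] E →L[ℝ] ℝ).hasFDerivAt (x := x - c)).comp x
      ((hasFDerivAt_id x).sub_const c)).const_smul (2 : ℝ)
  rw [laplacian_eq_sum_of_hasFDerivAt (stdOrthonormalBasis ℝ E)
    (.of_forall fun y => hasFDerivAt_norm_sub_sq) hfderiv]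
  have hunit (i : Fin (Module.finrank ℝ E)) :
      innerSL ℝ (stdOrthonormalBasis ℝ E i) (stdOrthonormalBasis ℝ E i) = 1 := by simp
  calc ∑ i, 2 * innerSL ℝ (stdOrthonormalBasis ℝ E i) (stdOrthonormalBasis ℝ E i)
    _ = 2 * dim := by simp only [hunit]; simp [mul_comm]

lemma laplacian_comp_norm_sub_sq {φ φ' : ℝ → ℝ} {φ'' : ℝ}
    (hφ : ∀ᶠ s in 𝓝 (‖x - c‖ ^ 2), HasDerivAt φ (φ' s) s)
    (hφ' : HasDerivAt φ' φ'' (‖x - c‖ ^ 2)) :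
    Δ (fun y => φ (‖y - c‖ ^ 2)) x =
      4 * φ'' * ‖x - c‖ ^ 2 + 2 * dim * φ' (‖x - c‖ ^ 2) := by
  have hsq : ContDiff ℝ 2 fun y : E => ‖y - c‖ ^ 2 := (contDiff_id.sub contDiff_const).norm_sq ℝ
  rw [laplacian_comp (g := fun y : E => ‖y - c‖ ^ 2) hφ hφ' hsq.contDiffAt,
    gradient_norm_sub_sq, laplacian_norm_sub_sq, norm_smul, Real.norm_ofNat]
  ring

lemma continuousAt_laplacian (hg : ContDiffAt ℝ 2 g x) : ContinuousAt (Δ g) x := by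
  have hfderiv₂ : ContinuousAt (fderiv ℝ (fderiv ℝ g)) x :=
    ((hg.fderiv_right (m := 1) (by norm_num)).fderiv_right (m := 0) (by norm_num)).continuousAt
  have hsum : Δ g =ᶠ[𝓝 x] fun y => ∑ i, fderiv ℝ (fderiv ℝ g) y
      (stdOrthonormalBasis ℝ E i) (stdOrthonormalBasis ℝ E i) :=
    (hg.eventually (by simp)).mono fun y hy => laplacian_eq_sum_fderiv_fderiv _ hy
  refine ContinuousAt.congr ?_ hsum.symm
  fun_prop

lemma laplacian_nonneg_of_isLocalMin (hg : ContDiffAt ℝ 2 g x) (hmin : IsLocalMin g x) :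
    0 ≤ Δ g x := by
  rw [laplacian_eq_sum_fderiv_fderiv (stdOrthonormalBasis ℝ E) hg]
  exact Finset.sum_nonneg fun i _ => fderiv_fderiv_nonneg_of_isLocalMin hg hmin _

lemma lap_eq_laplacian {n : ℕ} {g : EuclideanSpace ℝ (Fin n) → ℝ}
    {x : EuclideanSpace ℝ (Fin n)} (hg : ContDiffAt ℝ 2 g x) : lap g x = Δ g x := by
  rw [laplacian_eq_sum_fderiv_fderiv (EuclideanSpace.basisFun (Fin n) ℝ) hg]
  refine Finset.sum_congr rfl fun i _ => ?_
  rw [fderiv_clm_apply (differentiableAt_fderiv hg) (differentiableAt_const _)]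
  simp

end Laplacian

section MaximumPrinciple

lemma pos_of_pos_of_forall_first_zero {X : Type*} [TopologicalSpace X] [T2Space X] {K : Set X}
    {z : ℝ → X → ℝ} {t₀ t₁ : ℝ} (hK : IsCompact K)
    (hz : ContinuousOn (Function.uncurry z) (Icc t₀ t₁ ×ˢ K)) (hstart : ∀ x ∈ K, 0 < z t₀ x)
    (hzero : ∀ t ∈ Ioc t₀ t₁, ∀ x ∈ K, z t x = 0 → (∀ s ∈ Icc t₀ t, ∀ y ∈ K, 0 ≤ z s y) → False) :
    ∀ t ∈ Icc t₀ t₁, ∀ x ∈ K, 0 < z t x := by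
  by_contra! ⟨t', ht', x', hx', hneg⟩
  have hcyl : IsCompact (Icc t₀ t₁ ×ˢ K) := isCompact_Icc.prod hK
  have hbad : IsCompact ((Icc t₀ t₁ ×ˢ K) ∩ Function.uncurry z ⁻¹' Iic 0) :=
    hcyl.of_isClosed_subset (hz.preimage_isClosed_of_isClosed hcyl.isClosed isClosed_Iic)
      inter_subset_left
  obtain ⟨⟨t, x⟩, ⟨⟨ht, hx⟩, hle⟩, hfirst⟩ :=
    hbad.exists_isMinOn ⟨(t', x'), ⟨ht', hx'⟩, hneg⟩ continuous_fst.continuousOn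
  have hpos : ∀ s ∈ Ico t₀ t, ∀ y ∈ K, 0 < z s y := by
    intro s hs y hy
    by_contra! hsy
    exact hs.2.not_ge (hfirst (show (s, y) ∈ _ from ⟨⟨⟨hs.1, hs.2.le.trans ht.2⟩, hy⟩, hsy⟩))
  have ht₀ : t₀ < t := ht.1.lt_of_ne fun h => (hstart x hx).not_ge (h ▸ hle)
  have hnonneg : ∀ s ∈ Icc t₀ t, ∀ y ∈ K, 0 ≤ z s y := by
    intro s hs y hy
    have hcont : ContinuousOn (fun s => z s y) (Icc t₀ t) :=
      hz.comp (f := fun s => (s, y)) (by fun_prop) fun s hs => ⟨⟨hs.1, hs.2.trans ht.2⟩, hy⟩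
    rw [← closure_Ico ht₀.ne] at hs hcont
    exact le_on_closure (fun s hs => (hpos s hs y hy).le) continuousOn_const hcont hs
  exact hzero t ⟨ht₀, ht.2⟩ x hx (le_antisymm hle (hnonneg t ⟨ht₀.le, le_rfl⟩ x hx)) hnonneg

lemma deriv_nonpos_of_nonneg_on_Ico {φ : ℝ → ℝ} {t₀ t : ℝ} (ht : t₀ < t)
    (hφ : DifferentiableAt ℝ φ t) (hzero : φ t = 0) (hnonneg : ∀ s ∈ Ico t₀ t, 0 ≤ φ s) :
    deriv φ t ≤ 0 := by
  have hslope : Tendsto (slope φ t) (𝓝[<] t) (𝓝 (deriv φ t)) :=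
    (hasDerivWithinAt_iff_tendsto_slope' (by simp)).1 hφ.hasDerivAt.hasDerivWithinAt
  refine le_of_tendsto hslope ?_
  filter_upwards [Ico_mem_nhdsLT ht] with s hs
  rw [slope_def_field, hzero, sub_zero]
  exact div_nonpos_of_nonneg_of_nonpos (hnonneg s hs) (sub_nonpos.2 hs.2.le)

variable [InnerProductSpace ℝ E] [FiniteDimensional ℝ E]

/-- The inequality is only tested on smooth functions touching `z` from above at its zeros: this
is the parabolic minimum principle for strict supersolutions in the viscosity sense. -/
lemma pos_of_strict_supersolution {K : Set E} {z : ℝ → E → ℝ} {t₀ t₁ : ℝ} (hK : IsCompact K)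
    (hz : ContinuousOn (Function.uncurry z) (Icc t₀ t₁ ×ˢ K)) (hstart : ∀ x ∈ K, 0 < z t₀ x)
    (htouch : ∀ t ∈ Ioc t₀ t₁, ∀ x ∈ K, z t x = 0 → K ∈ 𝓝 x ∧ ∃ w : ℝ → E → ℝ, w t x = 0 ∧
      (∀ s ∈ Icc t₀ t, ∀ y ∈ K, z s y ≤ w s y) ∧ ContDiffAt ℝ 2 (w t) x ∧
      DifferentiableAt ℝ (fun s => w s x) t ∧ Δ (w t) x < deriv (fun s => w s x) t) :
    ∀ t ∈ Icc t₀ t₁, ∀ x ∈ K, 0 < z t x := by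
  refine pos_of_pos_of_forall_first_zero hK hz hstart fun t ht x hx hzx hnonneg => ?_
  obtain ⟨hKx, w, hwx, hzw, hw, hw_t, hlt⟩ := htouch t ht x hx hzx
  have hmin : IsLocalMin (w t) x := by
    filter_upwards [hKx] with y hy
    rw [hwx]
    exact (hnonneg t ⟨ht.1.le, le_rfl⟩ y hy).trans (hzw t ⟨ht.1.le, le_rfl⟩ y hy)
  have hspace : 0 ≤ Δ (w t) x := laplacian_nonneg_of_isLocalMin hw hmin
  have htime : deriv (fun s => w s x) t ≤ 0 :=
    deriv_nonpos_of_nonneg_on_Ico ht.1 hw_t hwx fun s hs =>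
      (hnonneg s ⟨hs.1, hs.2.le⟩ x hx).trans (hzw s ⟨hs.1, hs.2.le⟩ x hx)
  linarith

/-- `D` is a nonnegative classical supersolution of `∂ₜD = ΔD - C D` on the cylinder
`(0, T) × Ω`. Time difference quotients of the solution are of this kind. -/
structure IsNonnegSupersolution (Ω : Set E) (T C : ℝ) (D : ℝ → E → ℝ) : Prop where
  continuousOn : ContinuousOn (Function.uncurry D) (Ioo 0 T ×ˢ Ω)
  nonneg : ∀ t ∈ Ioo 0 T, ∀ x ∈ Ω, 0 ≤ D t x
  contDiffAt : ∀ t ∈ Ioo 0 T, ∀ x ∈ Ω, ContDiffAt ℝ 2 (D t) x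
  differentiableAt : ∀ t ∈ Ioo 0 T, ∀ x ∈ Ω, DifferentiableAt ℝ (fun s => D s x) t
  laplacian_le : ∀ t ∈ Ioo 0 T, ∀ x ∈ Ω, Δ (D t) x - C * D t x ≤ deriv (fun s => D s x) t

/-- `w` is regular at `(t, x)` and satisfies `∂ₜw ≤ Δw - C w` there. -/
structure IsSubsolutionAt (C : ℝ) (w : ℝ → E → ℝ) (t : ℝ) (x : E) : Prop where
  contDiffAt : ContDiffAt ℝ 2 (w t) x
  differentiableAt : DifferentiableAt ℝ (fun s => w s x) t
  le_laplacian : deriv (fun s => w s x) t ≤ Δ (w t) x - C * w t x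

lemma IsNonnegSupersolution.le_of_isSubsolutionAt {Ω K : Set E} {T C t₀ t₁ : ℝ} {D w : ℝ → E → ℝ}
    (hD : IsNonnegSupersolution Ω T C D) (hC : 0 < C) (hK : IsCompact K) (hKΩ : K ⊆ Ω)
    (ht₀ : 0 < t₀) (ht₁ : t₁ < T) (hw : ContinuousOn (Function.uncurry w) (Icc t₀ t₁ ×ˢ K))
    (hstart : ∀ x ∈ K, w t₀ x ≤ D t₀ x)
    (hsub : ∀ t ∈ Ioc t₀ t₁, ∀ x ∈ K, 0 < w t x → K ∈ 𝓝 x ∧ IsSubsolutionAt C w t x) :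
    ∀ t ∈ Icc t₀ t₁, ∀ x ∈ K, w t x ≤ D t x := by
  intro t ht x hx
  refine le_of_forall_pos_le_add fun ι hι => sub_nonneg.1 (le_of_lt ?_)
  have hcyl : Icc t₀ t₁ ×ˢ K ⊆ Ioo 0 T ×ˢ Ω :=
    prod_mono (fun s hs => ⟨ht₀.trans_le hs.1, hs.2.trans_lt ht₁⟩) hKΩ
  refine pos_of_strict_supersolution (z := fun t x => D t x + ι - w t x) hK
    (((hD.continuousOn.mono hcyl).add continuousOn_const).sub hw)
    (fun x hx => by linarith [hstart x hx]) (fun t ht x hx hzero => ?_) t ht x hx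
  obtain ⟨htT, hxΩ⟩ := hcyl (mk_mem_prod (Ioc_subset_Icc_self ht) hx)
  obtain ⟨hKx, hwx⟩ := hsub t ht x hx (by linarith [hD.nonneg t htT x hxΩ])
  have hD_x := hD.contDiffAt t htT x hxΩ
  have hD_t := hD.differentiableAt t htT x hxΩ
  have hlap : Δ (fun y => D t y + ι - w t y) x = Δ (D t) x - Δ (w t) x := by
    rw [← laplacian_add_const hD_x ι]
    exact (hD_x.add contDiffAt_const).laplacian_sub hwx.contDiffAt
  refine ⟨hKx, _, hzero, fun _ _ _ _ => le_rfl, (hD_x.add contDiffAt_const).sub hwx.contDiffAt,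
    (hD_t.add_const ι).sub hwx.differentiableAt, ?_⟩
  rw [hlap, deriv_fun_sub (hD_t.add_const ι) hwx.differentiableAt, deriv_add_const]
  have hCι : C * w t x = C * D t x + C * ι := by rw [← mul_add]; congr 1; linarith
  linarith [hD.laplacian_le t htT x hxΩ, hwx.le_laplacian, mul_pos hC hι]

end MaximumPrinciple

section Spreading

/-- The squared radius growing from `r ^ 2` at time `s` towards `R ^ 2`, with relaxation time
`1 / ν`. -/
noncomputable def sqRadius (r R ν s t : ℝ) : ℝ := R ^ 2 - (R ^ 2 - r ^ 2) * Real.exp (-ν * (t - s))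

/-- A decaying bump of height `a` supported in the ball of squared radius `ρ t` around `c`; it
serves as a subsolution with growing support. The cube makes it twice differentiable across the
boundary of the support. -/
noncomputable def growingBump (a Λ s : ℝ) (ρ : ℝ → ℝ) (c : E) (t : ℝ) (x : E) : ℝ :=
  a * Real.exp (-Λ * (t - s)) * (ρ t - ‖x - c‖ ^ 2) ^ 3

section sqRadius

variable {r R ν s t : ℝ}

lemma sqRadius_self : sqRadius r R ν s s = r ^ 2 := by simp [sqRadius]

lemma hasDerivAt_sqRadius :
    HasDerivAt (sqRadius r R ν s) (ν * ((R ^ 2 - r ^ 2) * Real.exp (-ν * (t - s)))) t := by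
  have hexp : HasDerivAt (fun t => Real.exp (-ν * (t - s)))
      (Real.exp (-ν * (t - s)) * -ν) t := by
    simpa using (((hasDerivAt_id t).sub_const s).const_mul (-ν)).exp
  exact ((hexp.const_mul (R ^ 2 - r ^ 2)).const_sub (R ^ 2)).congr_deriv (by ring)

lemma sqRadius_lt (hr : 0 < r) (hrR : r < R) : sqRadius r R ν s t < R ^ 2 :=
  sub_lt_self _ (mul_pos (sub_pos.2 (by gcongr)) (Real.exp_pos _))

lemma le_sqRadius (hr : 0 < r) (hrR : r < R) (hν : 0 < ν) (ht : s ≤ t) :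
    r ^ 2 ≤ sqRadius r R ν s t := by
  have hexp : Real.exp (-ν * (t - s)) ≤ 1 := Real.exp_le_one_iff.2 (by nlinarith)
  have hsq : 0 ≤ R ^ 2 - r ^ 2 := sub_nonneg.2 (by gcongr)
  have := mul_le_of_le_one_right hsq hexp
  simp only [sqRadius]
  linarith

lemma half_sq_le_sqRadius (hr : 0 < r) (hrR : r < R) (ht : 1 ≤ ν * (t - s)) :
    R ^ 2 / 2 ≤ sqRadius r R ν s t := by
  have hexp : Real.exp (-ν * (t - s)) ≤ 1 / 2 :=
    (Real.exp_le_exp.2 (by linarith)).trans Real.exp_neg_one_lt_half.le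
  have hsq : 0 ≤ R ^ 2 - r ^ 2 := sub_nonneg.2 (by gcongr)
  have := mul_le_mul_of_nonneg_left hexp hsq
  simp only [sqRadius]
  nlinarith [sq_nonneg r]

end sqRadius

section growingBump

variable {c x : E} {a Λ r s t : ℝ} {ρ : ℝ → ℝ}

lemma hasDerivAt_growingBump {ρ' : ℝ} (hρ : HasDerivAt ρ ρ' t) :
    HasDerivAt (fun τ => growingBump a Λ s ρ c τ x) (a * Real.exp (-Λ * (t - s)) *
      (3 * (ρ t - ‖x - c‖ ^ 2) ^ 2 * ρ' - Λ * (ρ t - ‖x - c‖ ^ 2) ^ 3)) t := by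
  have hexp : HasDerivAt (fun t => a * Real.exp (-Λ * (t - s)))
      (a * (Real.exp (-Λ * (t - s)) * -Λ)) t := by
    simpa using ((((hasDerivAt_id t).sub_const s).const_mul (-Λ)).exp).const_mul a
  refine (hexp.mul ((hρ.sub_const (‖x - c‖ ^ 2)).pow 3)).congr_deriv ?_
  push_cast [Pi.pow_apply]
  ring

lemma growingBump_self_le {δ : ℝ} {w : E → ℝ} (hr : 0 < r) (hδ : 0 < δ) (hρ : ρ s = r ^ 2)
    (hw : 0 ≤ w x) (hball : x ∈ closedBall c r → δ ≤ w x) :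
    growingBump (δ / (r ^ 2) ^ 3) Λ s ρ c s x ≤ w x := by
  simp only [growingBump, sub_self, mul_zero, Real.exp_zero, mul_one, hρ]
  rcases le_total ‖x - c‖ r with hx | hx
  · have hle : (r ^ 2 - ‖x - c‖ ^ 2) ^ 3 ≤ (r ^ 2) ^ 3 :=
      pow_le_pow_left₀ (sub_nonneg.2 (by gcongr)) (sub_le_self _ (by positivity)) 3
    calc δ / (r ^ 2) ^ 3 * (r ^ 2 - ‖x - c‖ ^ 2) ^ 3 ≤ δ / (r ^ 2) ^ 3 * (r ^ 2) ^ 3 := by gcongr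
      _ = δ := by field_simp
      _ ≤ w x := hball (mem_closedBall_iff_norm.2 hx)
  · have hodd : Odd 3 := by decide
    have hle : (r ^ 2 - ‖x - c‖ ^ 2) ^ 3 ≤ 0 :=
      hodd.pow_nonpos (sub_nonpos.2 (by gcongr))
    exact (mul_nonpos_of_nonneg_of_nonpos (by positivity) hle).trans hw

variable [InnerProductSpace ℝ E]

lemma contDiff_growingBump : ContDiff ℝ 2 (growingBump a Λ s ρ c t) :=
  contDiff_const.mul ((contDiff_const.sub ((contDiff_id.sub contDiff_const).norm_sq ℝ)).pow 3)

variable [FiniteDimensional ℝ E]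

lemma laplacian_growingBump :
    Δ (growingBump a Λ s ρ c t) x = a * Real.exp (-Λ * (t - s)) *
      (24 * (ρ t - ‖x - c‖ ^ 2) * ‖x - c‖ ^ 2 - 6 * dim * (ρ t - ‖x - c‖ ^ 2) ^ 2) := by
  set A := a * Real.exp (-Λ * (t - s))
  have hφ (σ : ℝ) : HasDerivAt (fun σ => A * (ρ t - σ) ^ 3) (A * (-3 * (ρ t - σ) ^ 2)) σ :=
    ((((hasDerivAt_id σ).const_sub (ρ t)).pow 3).const_mul A).congr_deriv (by simp)
  have hφ' (σ : ℝ) : HasDerivAt (fun σ => A * (-3 * (ρ t - σ) ^ 2)) (A * (6 * (ρ t - σ))) σ :=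
    (((((hasDerivAt_id σ).const_sub (ρ t)).pow 2).const_mul (-3)).const_mul A).congr_deriv
      (by push_cast [id]; ring)
  have hcomp := laplacian_comp_norm_sub_sq (c := c) (.of_forall hφ) (hφ' (‖x - c‖ ^ 2))
  refine Eq.trans hcomp ?_
  ring

lemma isSubsolutionAt_growingBump {C k ρ' : ℝ} (ha : 0 ≤ a)
    (hρ : HasDerivAt ρ ρ' t) (hk : ρ' ≤ k) (hr : r ^ 2 ≤ ρ t) (hx : ‖x - c‖ ^ 2 ≤ ρ t)
    (hΛ : (24 + 6 * dim + 3 * k) ^ 2 ≤ 96 * r ^ 2 * (Λ - C)) (hΛC : C < Λ) :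
    IsSubsolutionAt C (growingBump a Λ s ρ c) t x where
  contDiffAt := contDiff_growingBump.contDiffAt
  differentiableAt := (hasDerivAt_growingBump hρ).differentiableAt
  le_laplacian := by
    rw [(hasDerivAt_growingBump hρ).deriv, laplacian_growingBump, growingBump]
    set y := ρ t - ‖x - c‖ ^ 2 with hy
    have : 0 ≤ y := sub_nonneg.2 hx
    have hquad : 0 ≤ 24 * ρ t - (24 + 6 * dim + 3 * ρ') * y + (Λ - C) * y ^ 2 := by
      have hdisc : 0 ≤ 24 * r ^ 2 - (24 + 6 * dim + 3 * k) * y + (Λ - C) * y ^ 2 := by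
        refine nonneg_of_mul_nonneg_right ?_ (show 0 < 4 * (Λ - C) by linarith)
        nlinarith [sq_nonneg (2 * (Λ - C) * y - (24 + 6 * dim + 3 * k))]
      nlinarith
    have hgap : 0 ≤ a * Real.exp (-Λ * (t - s)) *
        (y * (24 * ρ t - (24 + 6 * dim + 3 * ρ') * y + (Λ - C) * y ^ 2)) := by positivity
    have hnorm : ‖x - c‖ ^ 2 = ρ t - y := by rw [hy]; ring
    rw [hnorm]
    linarith

end growingBump

variable [InnerProductSpace ℝ E] [FiniteDimensional ℝ E] {Ω : Set E} {c : E}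
  {C r R s s' T₀ δ : ℝ}

lemma IsNonnegSupersolution.growingBump_le {T ν Λ : ℝ} {D : ℝ → E → ℝ}
    (hD : IsNonnegSupersolution Ω T C D) (hC : 0 < C) (hr : 0 < r) (hrR : r < R) (hν : 0 < ν)
    (hCΛ : C < Λ) (hΛ : (24 + 6 * dim + 3 * (ν * R ^ 2)) ^ 2 ≤ 96 * r ^ 2 * (Λ - C))
    (hδ : 0 < δ) (hs : 0 < s) (hball : closedBall c R ⊆ Ω)
    (hstart : ∀ x ∈ closedBall c r, δ ≤ D s x) :
    ∀ t ∈ Ico s T, ∀ x ∈ closedBall c R,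
      growingBump (δ / (r ^ 2) ^ 3) Λ s (sqRadius r R ν s) c t x ≤ D t x := by
  intro t ht x hx
  have hcont : Continuous
      (Function.uncurry (growingBump (δ / (r ^ 2) ^ 3) Λ s (sqRadius r R ν s) c)) := by
    simp only [Function.uncurry_def, growingBump, sqRadius]
    fun_prop
  refine hD.le_of_isSubsolutionAt hC (isCompact_closedBall c R) hball hs ht.2 hcont.continuousOn
    (fun y hy => ?_) (fun τ hτ y _ hpos => ?_) t ⟨ht.1, le_rfl⟩ x hx
  · exact growingBump_self_le hr hδ sqRadius_self
      (hD.nonneg s ⟨hs, ht.1.trans_lt ht.2⟩ y (hball hy)) (hstart y)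
  · have hy_lt : ‖y - c‖ ^ 2 < sqRadius r R ν s τ := by
      by_contra! hle
      have hodd : Odd 3 := by decide
      exact hpos.not_ge (mul_nonpos_of_nonneg_of_nonpos (by positivity)
        (hodd.pow_nonpos (sub_nonpos.2 hle)))
    have hyR : ‖y - c‖ < R :=
      lt_of_pow_lt_pow_left₀ 2 (hr.trans hrR).le (hy_lt.trans (sqRadius_lt hr hrR))
    refine ⟨closedBall_mem_nhds_of_mem (mem_ball_iff_norm.2 hyR),
      isSubsolutionAt_growingBump (by positivity) hasDerivAt_sqRadius ?_
        (le_sqRadius hr hrR hν hτ.1.le) hy_lt.le hΛ hCΛ⟩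
    have hexp : Real.exp (-ν * (τ - s)) ≤ 1 := Real.exp_le_one_iff.2 (by nlinarith [hτ.1])
    have hsq : 0 ≤ R ^ 2 - r ^ 2 := sub_nonneg.2 (by gcongr)
    gcongr
    nlinarith [mul_le_of_le_one_right hsq hexp, sq_nonneg r]

lemma exists_forall_le_of_le_on_closedBall (T₀ : ℝ) (hC : 0 < C) (hr : 0 < r) (hrR : r < R)
    (hδ : 0 < δ) (hs : 0 < s) (hss' : s < s') (hball : closedBall c R ⊆ Ω) :
    ∃ δ' > 0, ∀ T ≤ T₀, ∀ D, IsNonnegSupersolution Ω T C D → (∀ x ∈ closedBall c r, δ ≤ D s x) →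
      ∀ t ∈ Ico s' T, ∀ x ∈ closedBall c (R / 2), δ' ≤ D t x := by
  set ν := 1 / (s' - s) with hν_def
  have hν : 0 < ν := one_div_pos.2 (sub_pos.2 hss')
  set Λ := C + (24 + 6 * dim + 3 * (ν * R ^ 2)) ^ 2 / (96 * r ^ 2) with hΛ
  have hCΛ : C < Λ := lt_add_of_pos_right _ (by positivity)
  refine ⟨δ / (r ^ 2) ^ 3 * Real.exp (-Λ * (T₀ - s)) * (R ^ 2 / 4) ^ 3, ?_, ?_⟩
  · have hR : 0 < R := hr.trans hrR
    positivity
  intro T hT D hD hstart t ht x hx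
  have hx_le : ‖x - c‖ ≤ R / 2 := mem_closedBall_iff_norm.1 hx
  refine le_trans ?_ (hD.growingBump_le hC hr hrR hν hCΛ (by rw [hΛ]; field_simp; simp) hδ hs hball
    hstart t ⟨hss'.le.trans ht.1, ht.2⟩ x (closedBall_subset_closedBall (by linarith) hx))
  have hρ : R ^ 2 / 2 ≤ sqRadius r R ν s t := by
    refine half_sq_le_sqRadius hr hrR ?_
    rw [hν_def, one_div, inv_mul_eq_div, one_le_div (sub_pos.2 hss')]
    linarith [ht.1]
  have hexp : Real.exp (-Λ * (T₀ - s)) ≤ Real.exp (-Λ * (t - s)) :=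
    Real.exp_le_exp.2 (by nlinarith [ht.2])
  have hgap : R ^ 2 / 4 ≤ sqRadius r R ν s t - ‖x - c‖ ^ 2 := by
    nlinarith [norm_nonneg (x - c)]
  rw [growingBump]
  gcongr

end Spreading

section MonotoneSolution

lemma continuousOn_uncurry_of_monotoneOn {X : Type*} [TopologicalSpace X] {Ω : Set X} {I : Set ℝ}
    {u : ℝ → X → ℝ} (hΩ : IsOpen Ω) (hI : IsOpen I)
    (hmono : ∀ x ∈ Ω, MonotoneOn (fun t => u t x) I)
    (hu_t : ∀ t ∈ I, ∀ x ∈ Ω, ContinuousAt (fun s => u s x) t)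
    (hu_x : ∀ t ∈ I, ∀ x ∈ Ω, ContinuousAt (u t) x) :
    ContinuousOn (Function.uncurry u) (I ×ˢ Ω) := by
  rintro ⟨t, x⟩ ⟨(ht : t ∈ I), (hx : x ∈ Ω)⟩
  refine ContinuousAt.continuousWithinAt (Metric.tendsto_nhds.2 fun ε hε => ?_)
  have htI : ∀ᶠ s in 𝓝 t, s ∈ I := hI.mem_nhds ht
  have hxΩ : ∀ᶠ y in 𝓝 x, y ∈ Ω := hΩ.mem_nhds hx
  have hnear : ∀ᶠ s in 𝓝 t, s ∈ I ∧ dist (u s x) (u t x) < ε / 2 :=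
    htI.and (Metric.tendsto_nhds.1 (hu_t t ht x hx) _ (half_pos hε))
  obtain ⟨⟨a, b⟩, ⟨ha, hb⟩, hab⟩ := (nhds_basis_Ioo t).eventually_iff.1 hnear
  obtain ⟨a', haa', ha't⟩ := exists_between ha
  obtain ⟨b', htb', hb'b⟩ := exists_between hb
  obtain ⟨ha'I, hdist_a⟩ := hab ⟨haa', ha't.trans hb⟩
  obtain ⟨hb'I, hdist_b⟩ := hab ⟨ha.trans htb', hb'b⟩
  have hx_a := Metric.tendsto_nhds.1 (hu_x a' ha'I x hx) _ (half_pos hε)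
  have hx_b := Metric.tendsto_nhds.1 (hu_x b' hb'I x hx) _ (half_pos hε)
  have ht_ab : ∀ᶠ s in 𝓝 t, s ∈ I ∧ s ∈ Ioo a' b' :=
    htI.and (Ioo_mem_nhds ha't htb')
  rw [nhds_prod_eq]
  filter_upwards [ht_ab.prod_mk (hxΩ.and (hx_a.and hx_b))]
    with ⟨s, y⟩ ⟨⟨hsI, hs⟩, hy, hya, hyb⟩
  have hle_a : u a' y ≤ u s y := hmono y hy ha'I hsI hs.1.le
  have hle_b : u s y ≤ u b' y := hmono y hy hsI hb'I hs.2.le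
  simp only [Function.uncurry_apply_pair, Real.dist_eq, abs_lt] at hdist_a hdist_b hya hyb ⊢
  constructor <;> linarith

variable [InnerProductSpace ℝ E] [FiniteDimensional ℝ E]

/-- `u` is a nonnegative classical solution of `∂ₜu = Δu + V f(u)` on `(0, T) × Ω` which is
nondecreasing in time. -/
structure IsMonotoneSolution (Ω : Set E) (T : ℝ) (V : E → ℝ) (f : ℝ → ℝ) (u : ℝ → E → ℝ) :
    Prop where
  nonneg : ∀ t ∈ Ioo 0 T, ∀ x ∈ Ω, 0 ≤ u t x
  differentiableAt : ∀ t ∈ Ioo 0 T, ∀ x ∈ Ω, DifferentiableAt ℝ (fun s => u s x) t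
  contDiffAt : ∀ t ∈ Ioo 0 T, ∀ x ∈ Ω, ContDiffAt ℝ 2 (u t) x
  deriv_eq : ∀ t ∈ Ioo 0 T, ∀ x ∈ Ω,
    deriv (fun s => u s x) t = Δ (u t) x + V x * f (u t x)
  deriv_nonneg : ∀ t ∈ Ioo 0 T, ∀ x ∈ Ω, 0 ≤ deriv (fun s => u s x) t

/-- The forward difference quotient of `u` in time, a substitute for `∂ₜu` which inherits the
spatial regularity of `u`. -/
noncomputable def timeQuot {X : Type*} (u : ℝ → X → ℝ) (τ t : ℝ) (x : X) : ℝ :=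
  (u (t + τ) x - u t x) / τ

namespace IsMonotoneSolution

variable {Ω : Set E} {T : ℝ} {V : E → ℝ} {f : ℝ → ℝ} {u : ℝ → E → ℝ}

lemma monotoneOn (hu : IsMonotoneSolution Ω T V f u) {x : E} (hx : x ∈ Ω) :
    MonotoneOn (fun t => u t x) (Ioo 0 T) := by
  refine monotoneOn_of_deriv_nonneg (convex_Ioo 0 T)
    (fun t ht => (hu.differentiableAt t ht x hx).continuousAt.continuousWithinAt) ?_ ?_ <;>
    rw [interior_Ioo] <;> intro t ht
  · exact (hu.differentiableAt t ht x hx).differentiableWithinAt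
  · exact hu.deriv_nonneg t ht x hx

lemma continuousOn (hu : IsMonotoneSolution Ω T V f u) (hΩ : IsOpen Ω) :
    ContinuousOn (Function.uncurry u) (Ioo 0 T ×ˢ Ω) :=
  continuousOn_uncurry_of_monotoneOn hΩ isOpen_Ioo (fun _ => hu.monotoneOn)
    (fun t ht x hx => (hu.differentiableAt t ht x hx).continuousAt)
    fun t ht x hx => (hu.contDiffAt t ht x hx).continuousAt

lemma continuousOn_deriv (hu : IsMonotoneSolution Ω T V f u) (hV : ContinuousOn V Ω)
    (hf : ContinuousOn f (Ici 0)) {t : ℝ} (ht : t ∈ Ioo 0 T) :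
    ContinuousOn (fun x => deriv (fun s => u s x) t) Ω := by
  have hlap : ContinuousOn (Δ (u t)) Ω := fun x hx =>
    (continuousAt_laplacian (hu.contDiffAt t ht x hx)).continuousWithinAt
  have hu_t : ContinuousOn (u t) Ω := fun x hx =>
    (hu.contDiffAt t ht x hx).continuousAt.continuousWithinAt
  exact (hlap.add (hV.mul (hf.comp hu_t (hu.nonneg t ht)))).congr (hu.deriv_eq t ht)

lemma laplacian_timeQuot (hu : IsMonotoneSolution Ω T V f u) {τ t : ℝ} {x : E}
    (ht : t ∈ Ioo 0 T) (htτ : t + τ ∈ Ioo 0 T) (hx : x ∈ Ω) :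
    Δ (timeQuot u τ t) x = (Δ (u (t + τ)) x - Δ (u t) x) / τ := by
  have hd : ContDiffAt ℝ 2 (u (t + τ) - u t) x :=
    (hu.contDiffAt _ htτ x hx).sub (hu.contDiffAt t ht x hx)
  have hquot : timeQuot u τ t = τ⁻¹ • (u (t + τ) - u t) :=
    funext fun y => div_eq_inv_mul _ _
  rw [hquot, laplacian_smul _ hd,
    (hu.contDiffAt _ htτ x hx).laplacian_sub (hu.contDiffAt t ht x hx), smul_eq_mul,
    div_eq_inv_mul]

lemma hasDerivAt_timeQuot (hu : IsMonotoneSolution Ω T V f u) {τ t : ℝ} {x : E}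
    (ht : t ∈ Ioo 0 T) (htτ : t + τ ∈ Ioo 0 T) (hx : x ∈ Ω) :
    HasDerivAt (fun s => timeQuot u τ s x)
      ((deriv (fun s => u s x) (t + τ) - deriv (fun s => u s x) t) / τ) t :=
  ((hu.differentiableAt _ htτ x hx).hasDerivAt.comp_add_const t τ |>.sub
    (hu.differentiableAt t ht x hx).hasDerivAt).div_const τ

lemma isNonnegSupersolution_timeQuot (hu : IsMonotoneSolution Ω T V f u) (hΩ : IsOpen Ω)
    {L B : ℝ} (hL : 0 ≤ L) (hf : ∀ a b, 0 ≤ a → a ≤ b → -L * (b - a) ≤ f b - f a)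
    (hV : ∀ x ∈ Ω, 0 ≤ V x) (hVB : ∀ x ∈ Ω, V x ≤ B) {τ : ℝ} (hτ : 0 < τ) :
    IsNonnegSupersolution Ω (T - τ) (B * L) (timeQuot u τ) := by
  have hmem : ∀ t ∈ Ioo 0 (T - τ), t ∈ Ioo 0 T ∧ t + τ ∈ Ioo 0 T := fun t ht =>
    ⟨⟨ht.1, by linarith [ht.2]⟩, ⟨by linarith [ht.1], by linarith [ht.2]⟩⟩
  have hle : ∀ t ∈ Ioo 0 (T - τ), ∀ x ∈ Ω, u t x ≤ u (t + τ) x := fun t ht x hx =>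
    hu.monotoneOn hx (hmem t ht).1 (hmem t ht).2 (by linarith)
  refine ⟨?_, fun t ht x hx => div_nonneg (sub_nonneg.2 (hle t ht x hx)) hτ.le,
    fun t ht x hx => ?_, fun t ht x hx => ?_, fun t ht x hx => ?_⟩
  · refine ContinuousOn.div_const (ContinuousOn.sub ?_ ?_) τ
    · exact (hu.continuousOn hΩ).comp (f := fun q : ℝ × E => (q.1 + τ, q.2)) (by fun_prop)
        fun q hq => ⟨(hmem _ hq.1).2, hq.2⟩
    · exact (hu.continuousOn hΩ).mono fun q hq => ⟨(hmem _ hq.1).1, hq.2⟩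
  · exact ((hu.contDiffAt _ (hmem t ht).2 x hx).sub
      (hu.contDiffAt t (hmem t ht).1 x hx)).div_const τ
  · exact (hu.hasDerivAt_timeQuot (hmem t ht).1 (hmem t ht).2 hx).differentiableAt
  · obtain ⟨ht', htτ⟩ := hmem t ht
    rw [hu.laplacian_timeQuot ht' htτ hx, (hu.hasDerivAt_timeQuot ht' htτ hx).deriv,
      hu.deriv_eq _ htτ x hx, hu.deriv_eq t ht' x hx, timeQuot, ← mul_div_assoc, ← sub_div]
    have hlip := mul_le_mul_of_nonneg_left (hf _ _ (hu.nonneg t ht' x hx) (hle t ht x hx))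
      (hV x hx)
    have hVL : V x * L * (u (t + τ) x - u t x) ≤ B * L * (u (t + τ) x - u t x) :=
      mul_le_mul_of_nonneg_right (mul_le_mul_of_nonneg_right (hVB x hx) hL)
        (sub_nonneg.2 (hle t ht x hx))
    exact div_le_div_of_nonneg_right (by linarith) hτ.le

lemma tendsto_timeQuot (hu : IsMonotoneSolution Ω T V f u) {t : ℝ} {x : E} (ht : t ∈ Ioo 0 T)
    (hx : x ∈ Ω) :
    Tendsto (fun τ => timeQuot u τ t x) (𝓝[>] 0) (𝓝 (deriv (fun s => u s x) t)) := by
  refine ((hasDerivAt_iff_tendsto_slope_zero.1 (hu.differentiableAt t ht x hx).hasDerivAt).mono_left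
    (nhdsWithin_mono _ fun τ hτ => ne_of_gt hτ)).congr fun τ => ?_
  rw [timeQuot, smul_eq_mul, div_eq_inv_mul]

end IsMonotoneSolution

end MonotoneSolution

section UniformGrowth

lemma exists_isOpen_eventually_forall_le {ι X : Type*} [TopologicalSpace X] [BaireSpace X]
    {l : Filter ι} [l.IsCountablyGenerated] {U : Set X} {φ : ι → X → ℝ} {c : ℝ} (hU : IsOpen U)
    (hne : U.Nonempty) (hcont : ∀ᶠ i in l, ContinuousOn (φ i) U)
    (hφ : ∀ x ∈ U, ∀ᶠ i in l, c ≤ φ i x) :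
    ∃ W ⊆ U, IsOpen W ∧ W.Nonempty ∧ ∀ᶠ i in l, ∀ x ∈ W, c ≤ φ i x := by
  obtain ⟨B, hB⟩ := l.exists_antitone_basis
  have : BaireSpace U := hU.baireSpace
  have : Nonempty U := hne.to_subtype
  let A : ℕ → Set U := fun k => ⋂ i ∈ B k ∩ {i | ContinuousOn (φ i) U}, {x | c ≤ φ i x}
  have hclosed : ∀ k, IsClosed (A k) := fun k => isClosed_biInter fun i hi =>
    isClosed_Ici.preimage hi.2.domRestrict
  have hcover : ⋃ k, A k = univ := by
    refine eq_univ_of_forall fun x => mem_iUnion.2 ?_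
    obtain ⟨k, -, hk⟩ := hB.toHasBasis.eventually_iff.1 (hφ x x.2)
    exact ⟨k, mem_iInter₂.2 fun i hi => hk hi.1⟩
  obtain ⟨k, hk⟩ := nonempty_interior_of_iUnion_of_closed hclosed hcover
  refine ⟨Subtype.val '' interior (A k), Subtype.coe_image_subset _ _,
    hU.isOpenMap_subtype_val _ isOpen_interior, hk.image _, ?_⟩
  filter_upwards [hB.toHasBasis.mem_of_mem trivial, hcont] with i hi hi'
  rintro _ ⟨x, hx, rfl⟩
  exact mem_iInter₂.1 (interior_subset hx) i ⟨hi, hi'⟩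

/-- From time `s` on, the time difference quotients of `u` on `W` with small step are bounded below
by a common positive constant. -/
def UniformGrowthOn {X : Type*} (u : ℝ → X → ℝ) (T s : ℝ) (W : Set X) : Prop :=
  ∃ δ > 0, ∀ᶠ τ in 𝓝[>] 0, ∀ t ∈ Ico s (T - τ), ∀ x ∈ W, δ ≤ timeQuot u τ t x

lemma UniformGrowthOn.mono {X : Type*} {u : ℝ → X → ℝ} {T s : ℝ} {W W' : Set X}
    (h : UniformGrowthOn u T s W') (hW : W ⊆ W') : UniformGrowthOn u T s W := by
  obtain ⟨δ, hδ, h⟩ := h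
  exact ⟨δ, hδ, h.mono fun τ hτ t ht x hx => hτ t ht x (hW hx)⟩

lemma UniformGrowthOn.union {X : Type*} {u : ℝ → X → ℝ} {T s : ℝ} {W W' : Set X}
    (h : UniformGrowthOn u T s W) (h' : UniformGrowthOn u T s W') :
    UniformGrowthOn u T s (W ∪ W') := by
  obtain ⟨δ, hδ, h⟩ := h
  obtain ⟨δ', hδ', h'⟩ := h'
  refine ⟨min δ δ', lt_min hδ hδ', ?_⟩
  filter_upwards [h, h'] with τ hτ hτ' t ht x hx
  exact hx.elim (fun hx => (min_le_left _ _).trans (hτ t ht x hx))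
    fun hx => (min_le_right _ _).trans (hτ' t ht x hx)

lemma uniformGrowthOn_of_le {X : Type*} {u : ℝ → X → ℝ} {T s : ℝ} (hs : T ≤ s) (W : Set X) :
    UniformGrowthOn u T s W := by
  refine ⟨1, one_pos, ?_⟩
  filter_upwards [self_mem_nhdsWithin] with τ (hτ : 0 < τ) t ht
  linarith [ht.1, ht.2]

lemma UniformGrowthOn.of_isCompact {X : Type*} [TopologicalSpace X] {u : ℝ → X → ℝ}
    {T s : ℝ} {K : Set X} (hK : IsCompact K)
    (h : ∀ x ∈ K, ∃ W ∈ 𝓝 x, UniformGrowthOn u T s W) : UniformGrowthOn u T s K :=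
  hK.induction_on ⟨1, one_pos, .of_forall fun _ _ _ x hx => absurd hx (notMem_empty x)⟩
    (fun _ _ hW h => h.mono hW) (fun _ _ => .union) fun x hx =>
    (h x hx).imp fun _ hW => ⟨mem_nhdsWithin_of_mem_nhds hW.1, hW.2⟩

variable [InnerProductSpace ℝ E] [FiniteDimensional ℝ E]
  {Ω : Set E} {T C : ℝ} {u : ℝ → E → ℝ}

lemma uniformGrowthOn_closedBall {c : E} {r R s s' : ℝ} (hC : 0 < C)
    (hquot : ∀ τ > 0, IsNonnegSupersolution Ω (T - τ) C (timeQuot u τ)) (hr : 0 < r) (hrR : r < R)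
    (hs : 0 < s) (hss' : s < s') (hball : closedBall c R ⊆ Ω)
    (hstart : ∃ δ > 0, ∀ᶠ τ in 𝓝[>] 0, ∀ x ∈ closedBall c r, δ ≤ timeQuot u τ s x) :
    UniformGrowthOn u T s' (closedBall c (R / 2)) := by
  obtain ⟨δ, hδ, hstart⟩ := hstart
  obtain ⟨δ', hδ', hspread⟩ := exists_forall_le_of_le_on_closedBall T hC hr hrR hδ hs hss' hball
  refine ⟨δ', hδ', ?_⟩
  filter_upwards [hstart, self_mem_nhdsWithin] with τ hτstart (hτ : 0 < τ)
  exact hspread (T - τ) (sub_le_self T hτ.le) _ (hquot τ hτ) hτstart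

lemma uniformGrowthOn_closedBall_of_nhds {c : E} {R t₁ : ℝ} (hC : 0 < C)
    (hquot : ∀ τ > 0, IsNonnegSupersolution Ω (T - τ) C (timeQuot u τ)) (ht₁ : 0 < t₁)
    (hR : 0 < R) (hball : closedBall c R ⊆ Ω)
    (hc : ∀ s > t₁, ∃ W ∈ 𝓝 c, UniformGrowthOn u T s W) :
    ∀ s > t₁, UniformGrowthOn u T s (closedBall c (R / 2)) := by
  intro s hs
  rcases le_or_gt T s with hTs | hsT
  · exact uniformGrowthOn_of_le hTs _
  obtain ⟨s', hts', hs's⟩ := exists_between hs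
  obtain ⟨W, hW, δ, hδ, hgrowth⟩ := hc s' hts'
  obtain ⟨ρ, hρ, hρW⟩ := nhds_basis_closedBall.mem_iff.1 hW
  obtain ⟨r, hr, hrlt⟩ := exists_between (lt_min hρ hR)
  refine uniformGrowthOn_closedBall hC hquot hr (hrlt.trans_le (min_le_right _ _))
    (ht₁.trans hts') hs's hball ⟨δ, hδ, ?_⟩
  filter_upwards [hgrowth, Ioo_mem_nhdsGT (sub_pos.2 (hs's.trans hsT))] with τ hτ hτT x hx
  exact hτ s' ⟨le_rfl, by linarith [hτT.2]⟩ x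
    (hρW (closedBall_subset_closedBall (hrlt.trans_le (min_le_left _ _)).le hx))

lemma exists_nhds_uniformGrowthOn_of_isPreconnected {t₁ : ℝ} (hΩ : IsOpen Ω)
    (hconn : IsPreconnected Ω) (hC : 0 < C)
    (hquot : ∀ τ > 0, IsNonnegSupersolution Ω (T - τ) C (timeQuot u τ)) (ht₁ : 0 < t₁) {x y : E}
    (hx : x ∈ Ω) (hy : y ∈ Ω)
    (hgrowth : ∀ s > t₁, ∃ W ∈ 𝓝 x, UniformGrowthOn u T s W) :
    ∀ s > t₁, ∃ W ∈ 𝓝 y, UniformGrowthOn u T s W := by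
  have hstep : ∀ c R, 0 < R → closedBall c R ⊆ Ω →
      (∀ s > t₁, ∃ W ∈ 𝓝 c, UniformGrowthOn u T s W) → ∀ z ∈ ball c (R / 2),
      ∀ s > t₁, ∃ W ∈ 𝓝 z, UniformGrowthOn u T s W := fun c R hR hball hc z hz s hs =>
    ⟨closedBall c (R / 2), mem_of_superset (isOpen_ball.mem_nhds hz) ball_subset_closedBall,
      uniformGrowthOn_closedBall_of_nhds hC hquot ht₁ hR hball hc s hs⟩
  refine hconn.induction₂' (fun x y => (∀ s > t₁, ∃ W ∈ 𝓝 x, UniformGrowthOn u T s W) →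
    ∀ s > t₁, ∃ W ∈ 𝓝 y, UniformGrowthOn u T s W) (fun c hc => ?_)
    (fun _ _ _ _ _ _ hxy hyz h => hyz (hxy h)) hx hy hgrowth
  obtain ⟨R, hR, hball⟩ := nhds_basis_closedBall.mem_iff.1 (hΩ.mem_nhds hc)
  filter_upwards [mem_nhdsWithin_of_mem_nhds (ball_mem_nhds c (show 0 < R / 4 by linarith))]
    with z hz
  refine ⟨fun h => hstep c R hR hball h z (ball_subset_ball (by linarith) hz),
    fun h => hstep z (R / 2) (half_pos hR) (fun w hw => hball ?_) h c ?_⟩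
  · rw [mem_closedBall] at hw ⊢
    linarith [dist_triangle w z c, mem_ball.1 hz]
  · rw [mem_ball_comm]
    exact ball_subset_ball (by linarith) hz

lemma IsMonotoneSolution.exists_isOpen_eventually_le_timeQuot {V : E → ℝ} {f : ℝ → ℝ} {t₁ : ℝ}
    {x₁ : E} (hu : IsMonotoneSolution Ω T V f u) (hΩ : IsOpen Ω) (hV : ContinuousOn V Ω)
    (hf : ContinuousOn f (Ici 0)) (ht₁ : t₁ ∈ Ioo 0 T) (hx₁ : x₁ ∈ Ω)
    (hpos : 0 < deriv (fun s => u s x₁) t₁) :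
    ∃ W ⊆ Ω, IsOpen W ∧ W.Nonempty ∧ ∃ δ > 0, ∀ᶠ τ in 𝓝[>] 0, ∀ x ∈ W, δ ≤ timeQuot u τ t₁ x := by
  set δ := deriv (fun s => u s x₁) t₁
  set U := {x ∈ Ω | δ / 2 < deriv (fun s => u s x) t₁}
  have hU : IsOpen U := (hu.continuousOn_deriv hV hf ht₁).isOpen_inter_preimage hΩ isOpen_Ioi
  have hcont : ∀ᶠ τ in 𝓝[>] 0, ContinuousOn (timeQuot u τ t₁) U := by
    filter_upwards [Ioo_mem_nhdsGT (sub_pos.2 ht₁.2)] with τ hτ x hx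
    have hτT : t₁ + τ ∈ Ioo 0 T := ⟨by linarith [ht₁.1, hτ.1], by linarith [hτ.2]⟩
    exact (((hu.contDiffAt _ hτT x hx.1).continuousAt.sub
      (hu.contDiffAt _ ht₁ x hx.1).continuousAt).div_const τ).continuousWithinAt
  obtain ⟨W, hWU, hW, hne, hle⟩ := exists_isOpen_eventually_forall_le hU
    ⟨x₁, hx₁, half_lt_self hpos⟩ hcont fun x hx =>
    ((hu.tendsto_timeQuot ht₁ hx.1).eventually_const_lt hx.2).mono fun τ => le_of_lt
  exact ⟨W, fun x hx => (hWU hx).1, hW, hne, δ / 2, half_pos hpos, hle⟩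

/-- Strong maximum principle for the difference quotients. Baire's theorem makes the positivity of
`∂ₜu` at one point uniform in the step on a small ball, and positivity spreads from there. -/
lemma IsMonotoneSolution.uniformGrowthOn_of_isCompact {V : E → ℝ} {f : ℝ → ℝ} {t₁ s : ℝ} {x₁ : E}
    {K : Set E} (hu : IsMonotoneSolution Ω T V f u) (hΩ : IsOpen Ω) (hconn : IsPreconnected Ω)
    (hV : ContinuousOn V Ω) (hf : ContinuousOn f (Ici 0)) (hC : 0 < C)
    (hquot : ∀ τ > 0, IsNonnegSupersolution Ω (T - τ) C (timeQuot u τ)) (ht₁ : t₁ ∈ Ioo 0 T)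
    (hx₁ : x₁ ∈ Ω) (hpos : 0 < deriv (fun s => u s x₁) t₁) (hs : t₁ < s) (hK : IsCompact K)
    (hKΩ : K ⊆ Ω) : UniformGrowthOn u T s K := by
  obtain ⟨W, hWΩ, hW, ⟨c, hc⟩, δ, hδ, hstart⟩ :=
    hu.exists_isOpen_eventually_le_timeQuot hΩ hV hf ht₁ hx₁ hpos
  obtain ⟨R, hR, hball⟩ := nhds_basis_closedBall.mem_iff.1 (hW.mem_nhds hc)
  have hgrowth : ∀ s > t₁, ∃ W ∈ 𝓝 c, UniformGrowthOn u T s W := fun s hs =>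
    ⟨closedBall c (R / 2), closedBall_mem_nhds c (half_pos hR),
      uniformGrowthOn_closedBall hC hquot (half_pos hR) (half_lt_self hR) ht₁.1 hs
        (hball.trans hWΩ) ⟨δ, hδ, hstart.mono fun τ hτ x hx =>
          hτ x (hball (closedBall_subset_closedBall (half_le_self hR.le) hx))⟩⟩
  exact .of_isCompact hK fun x hx =>
    exists_nhds_uniformGrowthOn_of_isPreconnected hΩ hconn hC hquot ht₁.1 (hWΩ hc) (hKΩ hx)
      hgrowth s hs

end UniformGrowth

section Nonlinearity

/-- `g s` is a subgradient at `s` of the restriction of `f` to `S`, for every `s ∈ S`. -/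
def IsSubgradientOn (S : Set ℝ) (f g : ℝ → ℝ) : Prop :=
  ∀ s ∈ S, ∀ r ∈ S, f s + g s * (r - s) ≤ f r

lemma isSubgradientOn_derivWithin {S : Set ℝ} {f : ℝ → ℝ} (hf : ConvexOn ℝ S f)
    (hf' : DifferentiableOn ℝ f S) : IsSubgradientOn S f (derivWithin f S) := by
  intro s hs r hr
  rcases lt_trichotomy s r with hsr | rfl | hrs
  · have hslope := hf.derivWithin_le_slope hs hr hsr (hf' s hs)
    rw [slope_def_field, le_div_iff₀ (sub_pos.2 hsr)] at hslope
    linarith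
  · rw [sub_self, mul_zero, add_zero]
  · have hslope := hf.slope_le_derivWithin hr hs hrs (hf' s hs)
    rw [slope_def_field, div_le_iff₀ (sub_pos.2 hrs)] at hslope
    linarith

lemma IsSubgradientOn.monotoneOn {S : Set ℝ} {f g : ℝ → ℝ} (hg : IsSubgradientOn S f g) :
    MonotoneOn g S := by
  intro a ha b hb hab
  rcases hab.eq_or_lt with rfl | hlt
  · exact le_rfl
  · have hle : g a * (b - a) ≤ g b * (b - a) := by linarith [hg a ha b hb, hg b hb a ha]
    exact le_of_mul_le_mul_right hle (sub_pos.2 hlt)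

lemma IsSubgradientOn.neg_abs_mul_le_sub {f g : ℝ → ℝ} (hg : IsSubgradientOn (Ici 0) f g)
    {a b : ℝ} (ha : 0 ≤ a) (hab : a ≤ b) : -|g 0| * (b - a) ≤ f b - f a := by
  have hga : -|g 0| ≤ g a := (neg_abs_le _).trans (hg.monotoneOn self_mem_Ici ha ha)
  linarith [hg a ha b (ha.trans hab), mul_le_mul_of_nonneg_right hga (sub_nonneg.2 hab)]

variable {f g : ℝ → ℝ} {p q : ℝ}

lemma tendsto_rpow_neg_mul_comp_mul_left (hlim : Tendsto (fun s : ℝ => s ^ (-p) * f s) atTop (𝓝 1))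
    {μ : ℝ} (hμ : 0 < μ) :
    Tendsto (fun s : ℝ => s ^ (-p) * f (μ * s)) atTop (𝓝 (μ ^ p)) := by
  rw [← mul_one (μ ^ p)]
  refine ((hlim.comp (tendsto_id.const_mul_atTop hμ)).const_mul (μ ^ p)).congr' ?_
  filter_upwards [eventually_gt_atTop 0] with s hs
  simp only [Function.comp_apply, id_eq]
  rw [Real.mul_rpow hμ.le hs.le, ← mul_assoc, ← mul_assoc, ← Real.rpow_add hμ, add_neg_cancel,
    Real.rpow_zero, one_mul]

lemma eventually_half_rpow_le_and_le_two_mul_rpow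
    (hlim : Tendsto (fun s : ℝ => s ^ (-p) * f s) atTop (𝓝 1)) :
    ∀ᶠ s in atTop, s ^ p / 2 ≤ f s ∧ f s ≤ 2 * s ^ p := by
  filter_upwards [hlim.eventually_const_lt (show (1 / 2 : ℝ) < 1 by norm_num),
    hlim.eventually_lt_const (show (1 : ℝ) < 2 by norm_num), eventually_gt_atTop 0]
    with s hlow hup hs
  have hsp : 0 < s ^ p := Real.rpow_pos_of_pos hs p
  rw [Real.rpow_neg hs.le, ← div_eq_inv_mul] at hlow hup
  rw [lt_div_iff₀ hsp] at hlow
  rw [div_lt_iff₀ hsp] at hup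
  constructor <;> linarith

lemma exists_mul_one_sub_lt_one_sub_rpow (hq : q < p) :
    ∃ μ ∈ Ioo (0 : ℝ) 1, q * (1 - μ) < 1 - μ ^ p := by
  have hderiv : HasDerivAt (fun x : ℝ => x ^ p) p 1 := by
    simpa only [Real.one_rpow, mul_one] using
      Real.hasDerivAt_rpow_const (x := 1) (p := p) (Or.inl one_ne_zero)
  have hslope : ∀ᶠ μ in 𝓝[<] 1, q < slope (fun x : ℝ => x ^ p) 1 μ :=
    ((hasDerivAt_iff_tendsto_slope.1 hderiv).mono_left
      (nhdsWithin_mono _ fun μ hμ => ne_of_lt hμ)).eventually_const_lt hq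
  obtain ⟨μ, hlt, hμ⟩ := (hslope.and (Ioo_mem_nhdsLT one_pos)).exists
  rw [slope_def_field, Real.one_rpow, lt_div_iff_of_neg (sub_neg.2 hμ.2)] at hlt
  exact ⟨μ, hμ, by linarith⟩

/-- Convexity turns the growth of `f` into growth of its logarithmic derivative, by comparing the
values of `f` at `μ s` and `s` with `μ < 1` close to `1`. -/
lemma IsSubgradientOn.eventually_mul_le_mul (hg : IsSubgradientOn (Ici 0) f g)
    (hlim : Tendsto (fun s : ℝ => s ^ (-p) * f s) atTop (𝓝 1)) (hq : q < p) :
    ∀ᶠ s in atTop, q * f s ≤ s * g s := by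
  obtain ⟨μ, ⟨hμ₀, hμ₁⟩, hμ⟩ := exists_mul_one_sub_lt_one_sub_rpow hq
  have hdiff := ((hlim.sub (tendsto_rpow_neg_mul_comp_mul_left hlim hμ₀)).sub
    (hlim.const_mul (q * (1 - μ)))).eventually_const_lt
      (show 0 < 1 - μ ^ p - q * (1 - μ) * 1 by linarith)
  filter_upwards [hdiff, eventually_gt_atTop 0] with s hdiff hs
  have hpos : 0 < s ^ (-p) * (f s - f (μ * s) - q * (1 - μ) * f s) := by linarith
  have hgap : q * (1 - μ) * f s ≤ f s - f (μ * s) :=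
    sub_nonneg.1 (pos_of_mul_pos_right hpos (Real.rpow_nonneg hs.le _)).le
  have hsub := hg s hs.le (μ * s) (mul_pos hμ₀ hs).le
  exact le_of_mul_le_mul_left (by linarith) (sub_pos.2 hμ₁)

lemma IsSubgradientOn.eventually_le_mul_rpow (hg : IsSubgradientOn (Ici 0) f g)
    (hf : ∀ s ≥ 0, 0 ≤ f s) (hlim : Tendsto (fun s : ℝ => s ^ (-p) * f s) atTop (𝓝 1)) :
    ∀ᶠ s in atTop, g s ≤ 2 * 2 ^ p * s ^ (p - 1) := by
  have hdouble := (tendsto_id.const_mul_atTop (show (0 : ℝ) < 2 by norm_num)).eventually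
    (eventually_half_rpow_le_and_le_two_mul_rpow hlim)
  filter_upwards [hdouble, eventually_gt_atTop 0] with s hdouble hs
  have hsub := hg s hs.le (2 * s) (mul_pos two_pos hs).le
  have hup : f (2 * s) ≤ 2 * (2 ^ p * s ^ p) := by
    rw [← Real.mul_rpow two_pos.le hs.le]
    exact hdouble.2
  rw [Real.rpow_sub_one hs.ne', ← mul_div_assoc, le_div_iff₀ hs]
  linarith [hf s hs.le]

/-- For `s ≥ s₀` the function `f` is comparable with `s ^ p` up to a factor `2`, and `g`, a
substitute for `f'`, has size at most `K s ^ (p - 1)` and satisfies `s g(s) ≥ q f(s)`. -/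
structure HasPowerGrowth (f g : ℝ → ℝ) (p q K s₀ : ℝ) : Prop where
  one_le : 1 ≤ s₀
  nonneg_const : 0 ≤ K
  half_rpow_le : ∀ s ≥ s₀, s ^ p / 2 ≤ f s
  le_two_mul_rpow : ∀ s ≥ s₀, f s ≤ 2 * s ^ p
  mul_le_mul : ∀ s ≥ s₀, q * f s ≤ s * g s
  le_mul_rpow : ∀ s ≥ s₀, g s ≤ K * s ^ (p - 1)

lemma IsSubgradientOn.exists_hasPowerGrowth (hg : IsSubgradientOn (Ici 0) f g)
    (hf : ∀ s ≥ 0, 0 ≤ f s) (hlim : Tendsto (fun s : ℝ => s ^ (-p) * f s) atTop (𝓝 1))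
    (hq : q < p) : ∃ K s₀, HasPowerGrowth f g p q K s₀ := by
  obtain ⟨s₀, h⟩ := eventually_atTop.1 ((eventually_ge_atTop 1).and
    ((eventually_half_rpow_le_and_le_two_mul_rpow hlim).and
      ((hg.eventually_mul_le_mul hlim hq).and (hg.eventually_le_mul_rpow hf hlim))))
  exact ⟨2 * 2 ^ p, s₀, (h s₀ le_rfl).1, by positivity, fun s hs => (h s hs).2.1.1,
    fun s hs => (h s hs).2.1.2, fun s hs => (h s hs).2.2.1, fun s hs => (h s hs).2.2.2⟩

lemma exists_forall_le_mul_one_add_rpow (hf : ContinuousOn f (Ici 0))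
    (hlim : Tendsto (fun s : ℝ => s ^ (-p) * f s) atTop (𝓝 1)) :
    ∃ C > 0, ∀ s ≥ 0, f s ≤ C * (1 + s ^ p) := by
  obtain ⟨s₀, hs₀⟩ := eventually_atTop.1 (eventually_half_rpow_le_and_le_two_mul_rpow hlim)
  obtain ⟨B, hB⟩ := isCompact_Icc.bddAbove_image (hf.mono (Icc_subset_Ici_self : Icc 0 s₀ ⊆ Ici 0))
  refine ⟨|B| + 2, by positivity, fun s hs => ?_⟩
  have hsp : 0 ≤ s ^ p := Real.rpow_nonneg hs p
  have hBsp : 0 ≤ |B| * s ^ p := by positivity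
  rcases le_total s s₀ with hle | hge
  · linarith [hB (mem_image_of_mem f ⟨hs, hle⟩), le_abs_self B]
  · linarith [(hs₀ s hge).2, abs_nonneg B]

end Nonlinearity

section Cutoff

lemma exists_isCompact_split_of_connectedComponentIn_disjoint {X : Type*} [TopologicalSpace X]
    [T2Space X] {Z F : Set X} {x : X} (hZ : IsCompact Z) (hF : IsClosed F) (hx : x ∈ Z)
    (h : Disjoint (connectedComponentIn Z x) F) :
    ∃ K₁ K₂ : Set X, IsCompact K₁ ∧ IsCompact K₂ ∧ x ∈ K₁ ∧ K₁ ∪ K₂ = Z ∧ Disjoint K₁ K₂ ∧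
      Disjoint K₁ F := by
  have : CompactSpace Z := isCompact_iff_compactSpace.1 hZ
  rw [connectedComponentIn_eq_image hx, connectedComponent_eq_iInter_isClopen] at h
  have : Nonempty {s : Set Z // IsClopen s ∧ ⟨x, hx⟩ ∈ s} := ⟨univ, isClopen_univ, mem_univ _⟩
  obtain ⟨⟨s, hs, hxs⟩, hsF⟩ :=
    (hF.preimage continuous_subtype_val).isCompact.elim_directed_family_closed
      (fun s : {s : Set Z // IsClopen s ∧ ⟨x, hx⟩ ∈ s} => (s : Set Z)) (fun s => s.2.1.1)
      (eq_empty_of_forall_notMem fun y hy =>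
        disjoint_left.1 h (mem_image_of_mem Subtype.val hy.2) hy.1)
      fun ⟨a, ha, hxa⟩ ⟨b, hb, hxb⟩ =>
        ⟨⟨a ∩ b, ha.inter hb, hxa, hxb⟩, inter_subset_left, inter_subset_right⟩
  refine ⟨Subtype.val '' s, Subtype.val '' sᶜ, hs.1.isCompact.image continuous_subtype_val,
    hs.compl.1.isCompact.image continuous_subtype_val, ⟨_, hxs, rfl⟩, ?_, ?_, ?_⟩
  · rw [← image_union, union_compl_self, image_univ, Subtype.range_coe]
  · exact (disjoint_image_iff Subtype.val_injective).2 disjoint_compl_right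
  · rw [disjoint_left]
    rintro _ ⟨y, hy, rfl⟩ hyF
    exact notMem_empty y (hsF.subset ⟨hyF, hy⟩)

lemma exists_isCompact_split_zeros {X : Type*} [TopologicalSpace X] [T2Space X] {Ω : Set X}
    {V : X → ℝ} {x₀ : X} (hΩ : IsOpen Ω) (hcpt : IsCompact (closure Ω))
    (hV : ContinuousOn V (closure Ω)) (hx₀ : x₀ ∈ Ω) (hVx₀ : V x₀ = 0)
    (hcomp : connectedComponentIn {x ∈ closure Ω | V x = 0} x₀ ∩ frontier Ω = ∅) :
    ∃ K₁ K₂ : Set X, IsCompact K₁ ∧ IsCompact K₂ ∧ x₀ ∈ K₁ ∧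
      K₁ ∪ K₂ = {x ∈ closure Ω | V x = 0} ∧ Disjoint K₁ (Ωᶜ ∪ K₂) := by
  have hzeros : IsCompact {x ∈ closure Ω | V x = 0} :=
    hcpt.of_isClosed_subset
      (hV.preimage_isClosed_of_isClosed isClosed_closure isClosed_singleton) inter_subset_left
  obtain ⟨K₁, K₂, hK₁, hK₂, hx₀K, hunion, hdisj, hfrontier⟩ :=
    exists_isCompact_split_of_connectedComponentIn_disjoint hzeros isClosed_frontier
      ⟨subset_closure hx₀, hVx₀⟩ (disjoint_iff_inter_eq_empty.2 hcomp)
  refine ⟨K₁, K₂, hK₁, hK₂, hx₀K, hunion, disjoint_union_right.2 ⟨?_, hdisj⟩⟩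
  refine disjoint_left.2 fun x hx hxΩ => disjoint_left.1 hfrontier hx ?_
  rw [hΩ.frontier_eq]
  exact ⟨(hunion.subset (Or.inl hx)).1, hxΩ⟩

variable [InnerProductSpace ℝ E] [FiniteDimensional ℝ E]

open scoped Manifold ContDiff in
lemma exists_contDiff_tsupport_disjoint_eventually_eq_one {K F : Set E} (hK : IsClosed K)
    (hF : IsClosed F) (hKF : Disjoint K F) :
    ∃ χ : E → ℝ, ContDiff ℝ 2 χ ∧ (∀ x, χ x ∈ Icc 0 1) ∧ Disjoint (tsupport χ) F ∧
      ∀ x ∈ K, χ =ᶠ[𝓝 x] 1 := by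
  obtain ⟨χ, hχ₀, hχ₁, hχ⟩ :=
    exists_contMDiffMap_zero_one_nhds_of_isClosed 𝓘(ℝ, E) (n := 2) hF hK hKF.symm
  exact ⟨χ, χ.contMDiff.contDiff, hχ, disjoint_right.2 fun x hx =>
      notMem_tsupport_iff_eventuallyEq.2 (hχ₀.filter_mono (nhds_le_nhdsSet hx)),
    fun x hx => hχ₁.filter_mono (nhds_le_nhdsSet hx)⟩

/-- `χ` is a `C²` cutoff function supported in `Ω` with `χ = 1` near `x₀`, such that `V ≥ c`
wherever `χ` is not locally equal to `1` on its support. -/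
structure IsAdaptedCutoff (Ω : Set E) (V : E → ℝ) (x₀ : E) (c G : ℝ) (χ : E → ℝ) : Prop where
  contDiff : ContDiff ℝ 2 χ
  mem_Icc : ∀ x, χ x ∈ Icc 0 1
  isCompact_tsupport : IsCompact (tsupport χ)
  tsupport_subset : tsupport χ ⊆ Ω
  eventuallyEq_one : χ =ᶠ[𝓝 x₀] 1
  eventuallyEq_one_or_le : ∀ x ∈ tsupport χ, χ =ᶠ[𝓝 x] 1 ∨ c ≤ V x
  norm_gradient_le : ∀ x ∈ tsupport χ, ‖∇ χ x‖ ≤ G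
  abs_laplacian_le : ∀ x ∈ tsupport χ, |Δ χ x| ≤ G

lemma exists_pos_forall_le_of_forall_pos {X : Type*} [TopologicalSpace X] {K : Set X} {V : X → ℝ}
    (hK : IsCompact K) (hV : ContinuousOn V K) (hpos : ∀ x ∈ K, 0 < V x) :
    ∃ c > 0, ∀ x ∈ K, c ≤ V x := by
  rcases K.eq_empty_or_nonempty with rfl | hne
  · exact ⟨1, one_pos, fun x hx => absurd hx (notMem_empty x)⟩
  · obtain ⟨m, hm, hmin⟩ := hK.exists_isMinOn hne hV
    exact ⟨V m, hpos m hm, fun x hx => hmin hx⟩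

lemma exists_norm_gradient_le_abs_laplacian_le {χ : E → ℝ} {K : Set E} (hχ : ContDiff ℝ 2 χ)
    (hK : IsCompact K) : ∃ G, (∀ x ∈ K, ‖∇ χ x‖ ≤ G) ∧ ∀ x ∈ K, |Δ χ x| ≤ G := by
  obtain ⟨G₁, hG₁⟩ :=
    hK.exists_bound_of_continuousOn (hχ.continuous_fderiv (by norm_num)).continuousOn
  obtain ⟨G₂, hG₂⟩ := hK.exists_bound_of_continuousOn
    (f := Δ χ) fun x _ => (continuousAt_laplacian hχ.contDiffAt).continuousWithinAt
  refine ⟨max G₁ G₂, fun x hx => ?_, fun x hx => (hG₂ x hx).trans (le_max_right _ _)⟩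
  rw [gradient, LinearIsometryEquiv.norm_map]
  exact (hG₁ x hx).trans (le_max_left _ _)

lemma exists_isAdaptedCutoff {Ω : Set E} {V : E → ℝ} {x₀ : E} (hΩ : IsOpen Ω)
    (hbdd : Bornology.IsBounded Ω) (hV : ContinuousOn V (closure Ω))
    (hV_nonneg : ∀ x ∈ closure Ω, 0 ≤ V x) (hx₀ : x₀ ∈ Ω) (hVx₀ : V x₀ = 0)
    (hcomp : connectedComponentIn {x ∈ closure Ω | V x = 0} x₀ ∩ frontier Ω = ∅) :
    ∃ χ G, ∃ c > 0, IsAdaptedCutoff Ω V x₀ c G χ := by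
  have hcpt : IsCompact (closure Ω) := hbdd.isCompact_closure
  obtain ⟨K₁, K₂, hK₁, hK₂, hx₀K, hunion, hdisj⟩ :=
    exists_isCompact_split_zeros hΩ hcpt hV hx₀ hVx₀ hcomp
  obtain ⟨χ, hχ, hχ_mem, hχF, hχK⟩ := exists_contDiff_tsupport_disjoint_eventually_eq_one
    hK₁.isClosed (hΩ.isClosed_compl.union hK₂.isClosed) hdisj
  obtain ⟨hχΩ, hχK₂⟩ := disjoint_union_right.1 hχF
  have hsub : tsupport χ ⊆ Ω := disjoint_compl_right_iff_subset.1 hχΩ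
  have hsubcl : tsupport χ ⊆ closure Ω := hsub.trans subset_closure
  have hsupp : IsCompact (tsupport χ) := hcpt.of_isClosed_subset (isClosed_tsupport χ) hsubcl
  have hVpos : ∀ x ∈ tsupport χ \ {x | χ =ᶠ[𝓝 x] 1}, 0 < V x := by
    rintro x ⟨hx, hx_one⟩
    refine (hV_nonneg x (hsubcl hx)).lt_of_ne fun hVx => ?_
    rcases hunion.superset ⟨hsubcl hx, hVx.symm⟩ with h₁ | h₂
    · exact hx_one (hχK x h₁)
    · exact disjoint_left.1 hχK₂ hx h₂
  obtain ⟨c, hc, hcV⟩ := exists_pos_forall_le_of_forall_pos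
    (hsupp.diff isOpen_setOfPred_eventually_nhds) (hV.mono (sdiff_subset.trans hsubcl)) hVpos
  obtain ⟨G, hG₁, hG₂⟩ := exists_norm_gradient_le_abs_laplacian_le hχ hsupp
  exact ⟨χ, G, c, hc, hχ, hχ_mem, hsupp, hsub, hχK x₀ hx₀K,
    fun x hx => or_iff_not_imp_left.2 fun h => hcV x ⟨hx, h⟩, hG₁, hG₂⟩

end Cutoff

section CutoffAbsorption

variable {f g : ℝ → ℝ} {p q q' c G K s s₀ : ℝ} {m : ℕ}

/-- The reaction absorbs the cutoff: wherever `a ^ (m + 2) * (f s + s ^ q) ≥ B`, the term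
`c * a ^ (m + 2) * s ^ (q - 1) * (s * g s - q * f s)` dominates the error caused by a cutoff
function with value `a` raised to the power `m + 2`, whose gradient and Laplacian are bounded by
`G`. -/
def AbsorbsCutoff (f g : ℝ → ℝ) (q c G : ℝ) (m : ℕ) (B : ℝ) : Prop :=
  ∀ a ∈ Ioc (0 : ℝ) 1, ∀ s ≥ 0, B ≤ a ^ (m + 2) * (f s + s ^ q) → 0 < s ∧
    ((m + 2) * G * (f s + s ^ q) +
        ((m + 2) * G * (g s + q * s ^ (q - 1))) ^ 2 / (q * (q - 1) * s ^ (q - 2))) * a ^ m ≤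
      c * a ^ (m + 2) * (s ^ (q - 1) * (s * g s - q * f s))

lemma le_sq_mul_rpow_of_rpow_le {a C θ : ℝ} {M : ℕ} (ha : a ∈ Ioc (0 : ℝ) 1) (hs : 0 < s)
    (hC : 0 ≤ C) (hp : 0 < p) (hθ : 0 < θ) (hM : 2 * p / θ ≤ M)
    (h : C ^ (p / θ) ≤ a ^ M * s ^ p) : C ≤ a ^ 2 * s ^ θ := by
  have ha₀ := ha.1
  have hpow : (a ^ 2 * s ^ θ) ^ (p / θ) = a ^ (2 * p / θ) * s ^ p := by
    rw [Real.mul_rpow (by positivity) (by positivity), ← Real.rpow_natCast, ← Real.rpow_mul ha₀.le,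
      ← Real.rpow_mul hs.le]
    congr 2
    · push_cast
      ring
    · field_simp
  have haM : a ^ M ≤ a ^ (2 * p / θ) := by
    rw [← Real.rpow_natCast]
    exact Real.rpow_le_rpow_of_exponent_ge ha₀ ha.2 hM
  refine (Real.rpow_le_rpow_iff hC (by positivity) (div_pos hp hθ)).1 (h.trans ?_)
  rw [hpow]
  gcongr

lemma HasPowerGrowth.add_rpow_le (h : HasPowerGrowth f g p q' K s₀) (hqp : q ≤ p) (hs : s₀ ≤ s) :
    f s + s ^ q ≤ 3 * s ^ p := by
  have := Real.rpow_le_rpow_of_exponent_le (h.one_le.trans hs) hqp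
  linarith [h.le_two_mul_rpow s hs]

lemma HasPowerGrowth.sub_mul_rpow_le (h : HasPowerGrowth f g p q' K s₀) (hqq' : q ≤ q')
    (hs : s₀ ≤ s) :
    (q' - q) / 2 * s ^ (p + q - 1) ≤ s ^ (q - 1) * (s * g s - q * f s) := by
  have hs₀ : 0 < s := one_pos.trans_le (h.one_le.trans hs)
  have hsplit : s ^ (p + q - 1) = s ^ (q - 1) * s ^ p := by
    rw [← Real.rpow_add hs₀]
    ring_nf
  have hlow : (q' - q) * (s ^ p / 2) ≤ (q' - q) * f s :=
    mul_le_mul_of_nonneg_left (h.half_rpow_le s hs) (sub_nonneg.2 hqq')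
  calc (q' - q) / 2 * s ^ (p + q - 1) = s ^ (q - 1) * ((q' - q) * (s ^ p / 2)) := by
        rw [hsplit]; ring
    _ ≤ s ^ (q - 1) * (s * g s - q * f s) := by
        gcongr
        linarith [h.mul_le_mul s hs]

lemma HasPowerGrowth.cutoff_error_le (h : HasPowerGrowth f g p q' K s₀) (hq : 1 < q)
    (hqp : q ≤ p) (hq' : 0 ≤ q') (hf : 0 ≤ f s) (hG : 0 ≤ G) (hs : s₀ ≤ s) :
    (m + 2) * G * (f s + s ^ q) +
        ((m + 2) * G * (g s + q * s ^ (q - 1))) ^ 2 / (q * (q - 1) * s ^ (q - 2)) ≤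
      ((m + 2) * G * 3 + ((m + 2) * G * (K + q)) ^ 2 / (q * (q - 1))) * s ^ (2 * p - q) := by
  have hs₁ : 1 ≤ s := h.one_le.trans hs
  have hs₀ : 0 < s := one_pos.trans_le hs₁
  have hq₁ : 0 < q - 1 := sub_pos.2 hq
  have hF : f s + s ^ q ≤ 3 * s ^ (2 * p - q) :=
    (h.add_rpow_le hqp hs).trans (by gcongr; linarith)
  have hg : 0 ≤ g s :=
    nonneg_of_mul_nonneg_right ((mul_nonneg hq' hf).trans (h.mul_le_mul s hs)) hs₀
  have hF₁ : g s + q * s ^ (q - 1) ≤ (K + q) * s ^ (p - 1) := by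
    have : s ^ (q - 1) ≤ s ^ (p - 1) := by gcongr
    nlinarith [h.le_mul_rpow s hs]
  have hquot : (s ^ (p - 1)) ^ 2 / s ^ (q - 2) = s ^ (2 * p - q) := by
    rw [← Real.rpow_natCast, ← Real.rpow_mul hs₀.le, ← Real.rpow_sub hs₀]
    congr 1
    push_cast
    ring
  calc _ ≤ (m + 2) * G * (3 * s ^ (2 * p - q)) +
        ((m + 2) * G * ((K + q) * s ^ (p - 1))) ^ 2 / (q * (q - 1) * s ^ (q - 2)) := by gcongr
    _ = _ := by rw [← hquot]; field_simp

lemma HasPowerGrowth.exists_forall_le_sq_mul_rpow {C θ : ℝ} {M : ℕ}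
    (h : HasPowerGrowth f g p q' K s₀) (hfc : ContinuousOn f (Ici 0)) (hf : ∀ s ≥ 0, 0 ≤ f s)
    (hq : 0 < q) (hqp : q ≤ p) (hC : 0 ≤ C) (hθ : 0 < θ) (hM : 2 * p / θ ≤ M) :
    ∃ B > 0, ∀ a ∈ Ioc (0 : ℝ) 1, ∀ s ≥ 0, B ≤ a ^ M * (f s + s ^ q) →
      s₀ ≤ s ∧ C ≤ a ^ 2 * s ^ θ := by
  have hFc : ContinuousOn (fun s : ℝ => f s + s ^ q) (Icc 0 s₀) :=
    (hfc.mono Icc_subset_Ici_self).add (Real.continuous_rpow_const hq.le).continuousOn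
  obtain ⟨F₀, hF₀⟩ := isCompact_Icc.bddAbove_image hFc
  refine ⟨max (F₀ + 1) (3 * C ^ (p / θ) + 1), lt_max_of_lt_right (by positivity), ?_⟩
  intro a ha s hs hB
  have haM : a ^ M ≤ 1 := pow_le_one₀ ha.1.le ha.2
  have hFs : 0 ≤ f s + s ^ q := add_nonneg (hf s hs) (Real.rpow_nonneg hs q)
  have hs₀ : s₀ ≤ s := by
    by_contra! hlt
    have : f s + s ^ q ≤ F₀ := hF₀ ⟨s, ⟨hs, hlt.le⟩, rfl⟩
    linarith [mul_le_of_le_one_left hFs haM, (le_max_left _ _).trans hB]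
  refine ⟨hs₀, le_sq_mul_rpow_of_rpow_le ha (one_pos.trans_le (h.one_le.trans hs₀)) hC
    (hq.trans_le hqp) hθ hM ?_⟩
  linarith [(le_max_right _ _).trans hB,
    mul_le_mul_of_nonneg_left (h.add_rpow_le hqp hs₀) (pow_pos ha.1 M).le]

-- The reaction gains the factor `s ^ θ` with `θ = 2 * q - p - 1` over the cutoff error, which is
-- large enough to pay for the two missing powers of the cutoff as soon as `m + 2 ≥ 2 * p / θ`.
lemma HasPowerGrowth.exists_absorbsCutoff (h : HasPowerGrowth f g p q' K s₀)
    (hfc : ContinuousOn f (Ici 0)) (hf : ∀ s ≥ 0, 0 ≤ f s) (hq : 1 < q) (hqq' : q < q')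
    (hqp : q ≤ p) (hθ : p + 1 < 2 * q) (hc : 0 < c) (hG : 0 ≤ G) :
    ∃ (m : ℕ) (B : ℝ), 0 < B ∧ AbsorbsCutoff f g q c G m B := by
  have hθ₀ : 0 < 2 * q - p - 1 := by linarith
  obtain ⟨m, hm⟩ := exists_nat_ge (2 * p / (2 * q - p - 1))
  have : 0 ≤ K := h.nonneg_const
  have : 0 < q - 1 := sub_pos.2 hq
  have hqq'₀ := sub_pos.2 hqq'
  set K₁ := (m + 2) * G * 3 + ((m + 2) * G * (K + q)) ^ 2 / (q * (q - 1))
  set C := K₁ / (c * ((q' - q) / 2)) with hC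
  obtain ⟨B, hB₀, hB⟩ := h.exists_forall_le_sq_mul_rpow (C := C) (M := m + 2) hfc hf (by linarith)
    hqp (by positivity) hθ₀ (hm.trans (by push_cast; linarith))
  refine ⟨m, B, hB₀, fun a ha s hs has => ?_⟩
  obtain ⟨hs₀, hCs⟩ := hB a ha s hs has
  have hs_pos : 0 < s := one_pos.trans_le (h.one_le.trans hs₀)
  have ha₀ := ha.1
  refine ⟨hs_pos, ?_⟩
  calc _ ≤ K₁ * s ^ (2 * p - q) * a ^ m :=
        mul_le_mul_of_nonneg_right (h.cutoff_error_le hq hqp (by linarith) (hf s hs) hG hs₀)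
          (by positivity)
    _ = c * a ^ m * ((q' - q) / 2) * s ^ (2 * p - q) * C := by
        rw [hC]
        field_simp
    _ ≤ c * a ^ m * ((q' - q) / 2) * s ^ (2 * p - q) * (a ^ 2 * s ^ (2 * q - p - 1)) := by
        gcongr
    _ = c * a ^ (m + 2) * ((q' - q) / 2 * s ^ (p + q - 1)) := by
        rw [show p + q - 1 = (2 * p - q) + (2 * q - p - 1) by ring, Real.rpow_add hs_pos]
        ring
    _ ≤ _ := mul_le_mul_of_nonneg_left (h.sub_mul_rpow_le hqq'.le hs₀) (by positivity)

variable [InnerProductSpace ℝ E]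

lemma neg_div_le_mul_norm_sq_add_inner {w : ℝ} (hw : 0 < w) (ξ η : E) :
    -(‖ξ‖ ^ 2 / w) ≤ w * ‖η‖ ^ 2 + 2 * ⟪ξ, η⟫_ℝ := by
  have hsq : 0 ≤ ‖w • η + ξ‖ ^ 2 / w := by positivity
  have hexp : ‖w • η + ξ‖ ^ 2 / w = w * ‖η‖ ^ 2 + 2 * ⟪ξ, η⟫_ℝ + ‖ξ‖ ^ 2 / w := by
    rw [norm_add_sq_real, norm_smul, real_inner_smul_left, real_inner_comm, mul_pow,
      Real.norm_eq_abs, sq_abs]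
    field_simp
  linarith

variable [FiniteDimensional ℝ E] {χ : E → ℝ} {x : E}

lemma gradient_pow (hχ : DifferentiableAt ℝ χ x) (m : ℕ) :
    ∇ (fun y => χ y ^ (m + 2)) x = ((m + 2) * χ x ^ (m + 1)) • ∇ χ x := by
  refine gradient_comp (φ := fun r => r ^ (m + 2)) ?_ hχ
  simpa using hasDerivAt_pow (m + 2) (χ x)

lemma laplacian_pow (hχ : ContDiffAt ℝ 2 χ x) (m : ℕ) :
    Δ (fun y => χ y ^ (m + 2)) x =
      (m + 2) * (m + 1) * χ x ^ m * ‖∇ χ x‖ ^ 2 + (m + 2) * χ x ^ (m + 1) * Δ χ x := by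
  refine laplacian_comp (φ := fun r => r ^ (m + 2)) (φ' := fun r => (m + 2) * r ^ (m + 1))
    (.of_forall fun r => ?_) ?_ hχ
  · simpa using hasDerivAt_pow (m + 2) r
  · simpa [mul_assoc] using (hasDerivAt_pow (m + 1) (χ x)).const_mul ((m : ℝ) + 2)

lemma neg_mul_pow_le_cutoff_terms {b b₁ w : ℝ} (hχ : ContDiffAt ℝ 2 χ x) (hmem : χ x ∈ Icc 0 1)
    (h₁ : ‖∇ χ x‖ ≤ G) (h₂ : |Δ χ x| ≤ G) (hb : 0 ≤ b) (hw : 0 < w) (η : E) :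
    -(((m + 2) * G * b + ((m + 2) * G * b₁) ^ 2 / w) * χ x ^ m) ≤
      b * Δ (fun y => χ y ^ (m + 2)) x + 2 * b₁ * ⟪∇ (fun y => χ y ^ (m + 2)) x, η⟫_ℝ +
        χ x ^ (m + 2) * (w * ‖η‖ ^ 2) := by
  obtain ⟨ha₀, ha₁⟩ := hmem
  have hΔ : -((m + 2) * G * b * χ x ^ m) ≤ (m + 2) * χ x ^ (m + 1) * Δ χ x * b := by
    have hpow : χ x ^ (m + 1) ≤ χ x ^ m := pow_le_pow_of_le_one ha₀ ha₁ m.le_succ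
    have habs : |(m + 2) * χ x ^ (m + 1) * Δ χ x * b| ≤ (m + 2) * χ x ^ m * G * b := by
      rw [abs_mul, abs_mul, abs_of_nonneg hb, abs_of_nonneg (by positivity)]
      gcongr
    linarith [(abs_le.1 habs).1]
  have hsq := neg_div_le_mul_norm_sq_add_inner hw (((m + 2) * b₁) • ∇ χ x) (χ x • η)
  have hξ : ‖((m + 2) * b₁) • ∇ χ x‖ ^ 2 ≤ ((m + 2) * G * b₁) ^ 2 := by
    rw [norm_smul, mul_pow, Real.norm_eq_abs, sq_abs]
    calc ((m + 2) * b₁) ^ 2 * ‖∇ χ x‖ ^ 2 ≤ ((m + 2) * b₁) ^ 2 * G ^ 2 := by gcongr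
      _ = _ := by ring
  rw [norm_smul (χ x), mul_pow, Real.norm_eq_abs, sq_abs, real_inner_smul_left,
    real_inner_smul_right] at hsq
  have hgrad := mul_le_mul_of_nonneg_left
    ((neg_le_neg (div_le_div_of_nonneg_right hξ hw.le)).trans hsq) (pow_nonneg ha₀ m)
  have hpos : 0 ≤ (m + 2) * (m + 1) * χ x ^ m * ‖∇ χ x‖ ^ 2 * b := by positivity
  rw [laplacian_pow hχ, gradient_pow (hχ.differentiableAt two_ne_zero), real_inner_smul_left]
  linear_combination hΔ + hgrad + hpos

lemma IsAdaptedCutoff.reaction_add_cutoff_terms_pos {Ω : Set E} {V : E → ℝ} {x₀ : E} {B : ℝ}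
    (hχ : IsAdaptedCutoff Ω V x₀ c G χ) (habs : AbsorbsCutoff f g q c G m B) (hq : 1 < q)
    (hc : 0 < c) (hV : 0 ≤ V x) (hx : x ∈ tsupport χ) (hχx : 0 < χ x) (hs : 0 ≤ s)
    (hF : 0 < f s + s ^ q) (hB : B ≤ χ x ^ (m + 2) * (f s + s ^ q)) (η : E) :
    0 < V x * χ x ^ (m + 2) * (s ^ (q - 1) * (s * g s - q * f s)) +
      χ x ^ (m + 2) * (f s + s ^ q) +
      ((f s + s ^ q) * Δ (fun y => χ y ^ (m + 2)) x +
        2 * (g s + q * s ^ (q - 1)) * ⟪∇ (fun y => χ y ^ (m + 2)) x, η⟫_ℝ +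
        χ x ^ (m + 2) * (q * (q - 1) * s ^ (q - 2) * ‖η‖ ^ 2)) := by
  obtain ⟨hs₀, habs⟩ := habs (χ x) ⟨hχx, (hχ.mem_Icc x).2⟩ s hs hB
  have hw : 0 < q * (q - 1) * s ^ (q - 2) := by
    have := sub_pos.2 hq
    positivity
  have hG : 0 ≤ G := (norm_nonneg _).trans (hχ.norm_gradient_le x hx)
  have hR : 0 ≤ s ^ (q - 1) * (s * g s - q * f s) := by
    refine nonneg_of_mul_nonneg_right (le_trans ?_ habs) (by positivity)
    positivity
  have hpos : 0 < χ x ^ (m + 2) * (f s + s ^ q) := by positivity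
  rcases hχ.eventuallyEq_one_or_le x hx with hone | hcV
  · have hpow : (fun y => χ y ^ (m + 2)) =ᶠ[𝓝 x] fun _ => (1 : ℝ) := by
      filter_upwards [hone] with y hy
      rw [hy, Pi.one_apply, one_pow]
    have hΔ : Δ (fun y => χ y ^ (m + 2)) x = 0 := by
      rw [(laplacian_congr_nhds hpow).eq_of_nhds, laplacian_const]
      rfl
    have hgrad : ∇ (fun y => χ y ^ (m + 2)) x = 0 := by
      rw [hpow.gradient_eq, gradient_fun_const]
    rw [hΔ, hgrad, inner_zero_left]
    have : 0 ≤ χ x ^ (m + 2) * (q * (q - 1) * s ^ (q - 2) * ‖η‖ ^ 2) := by positivity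
    have : 0 ≤ V x * χ x ^ (m + 2) * (s ^ (q - 1) * (s * g s - q * f s)) := by positivity
    linarith
  · have hbound := neg_mul_pow_le_cutoff_terms (m := m) (b₁ := g s + q * s ^ (q - 1))
      hχ.contDiff.contDiffAt (hχ.mem_Icc x) (hχ.norm_gradient_le x hx) (hχ.abs_laplacian_le x hx)
      hF.le hw η
    have hcV' : c * χ x ^ (m + 2) * (s ^ (q - 1) * (s * g s - q * f s)) ≤
        V x * χ x ^ (m + 2) * (s ^ (q - 1) * (s * g s - q * f s)) := by gcongr
    linarith

end CutoffAbsorption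

section GrowthComparison

/-- The line through `(s, f s)` with slope `g s`. Supporting lines serve as smooth minorants of the
convex function `f`, which need not be twice differentiable. -/
def supportLine (f g : ℝ → ℝ) (s r : ℝ) : ℝ := f s + g s * (r - s)

/-- The weight `χ ^ (m + 2) * (f r + r ^ q)`: the localisation by a cutoff function `χ` of the
nonlinearity `f` augmented by a lower order power. -/
noncomputable def cutoffWeight {X : Type*} (χ : X → ℝ) (f : ℝ → ℝ) (q : ℝ) (m : ℕ) (x : X)
    (r : ℝ) : ℝ :=
  χ x ^ (m + 2) * (f r + r ^ q)

lemma cutoffWeight_supportLine_self {X : Type*} (χ : X → ℝ) (f g : ℝ → ℝ) (q : ℝ) (m : ℕ) (x : X)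
    (s : ℝ) : cutoffWeight χ (supportLine f g s) q m x s = cutoffWeight χ f q m x s := by
  simp [cutoffWeight, supportLine]

lemma IsSubgradientOn.cutoffWeight_supportLine_le {X : Type*} {χ : X → ℝ} {x : X} {f g : ℝ → ℝ}
    {S : Set ℝ} {s r : ℝ} (hg : IsSubgradientOn S f g) (hs : s ∈ S) (hr : r ∈ S) (hχ : 0 ≤ χ x)
    (q : ℝ) (m : ℕ) : cutoffWeight χ (supportLine f g s) q m x r ≤ cutoffWeight χ f q m x r :=
  mul_le_mul_of_nonneg_left (add_le_add_left (hg s hs r hr) _) (pow_nonneg hχ _)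

lemma hasDerivAt_supportLine_add_rpow (f g : ℝ → ℝ) {q s r : ℝ} (hr : 0 < r) :
    HasDerivAt (fun r => supportLine f g s r + r ^ q) (g s + q * r ^ (q - 1)) r := by
  have hline : HasDerivAt (supportLine f g s) (g s) r :=
    ((((hasDerivAt_id r).sub_const s).const_mul (g s)).const_add (f s)).congr_deriv (mul_one _)
  exact hline.add (Real.hasDerivAt_rpow_const (.inl hr.ne'))

lemma hasDerivAt_add_mul_rpow (a : ℝ) {q r : ℝ} (hr : 0 < r) :
    HasDerivAt (fun r => a + q * r ^ (q - 1)) (q * (q - 1) * r ^ (q - 2)) r := by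
  have := ((Real.hasDerivAt_rpow_const (p := q - 1) (.inl hr.ne')).const_mul q).const_add a
  rwa [show q - 1 - 1 = q - 2 by ring, ← mul_assoc] at this

/-- The comparison function of Friedman–McLeod type: the difference quotient `(u (t + τ) - u t) / τ`
minus `ε * exp (-(t - t₀)) * F x (u t x)`. Its positivity bounds `∂ₜ u` below by a multiple of
`F x u`. -/
noncomputable def growthDefect {X : Type*} (u : ℝ → X → ℝ) (F : X → ℝ → ℝ)
    (τ ε t₀ t : ℝ) (x : X) : ℝ :=
  timeQuot u τ t x - ε * Real.exp (-(t - t₀)) * F x (u t x)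

lemma hasDerivAt_growthDefect {X : Type*} {u : ℝ → X → ℝ} {F : X → ℝ → ℝ} {x : X}
    {τ ε t₀ t D D' F' : ℝ}
    (hD : HasDerivAt (fun s => timeQuot u τ s x) D' t) (hu : HasDerivAt (fun s => u s x) D t)
    (hF : HasDerivAt (F x) F' (u t x)) :
    HasDerivAt (fun s => growthDefect u F τ ε t₀ s x)
      (D' + ε * Real.exp (-(t - t₀)) * (F x (u t x) - F' * D)) t := by
  have hexp : HasDerivAt (fun s => ε * Real.exp (-(s - t₀))) (-(ε * Real.exp (-(t - t₀)))) t := by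
    simpa using ((((hasDerivAt_id t).sub_const t₀).neg).exp).const_mul ε
  refine (hD.sub (hexp.mul (hF.comp t hu))).congr_deriv ?_
  rw [Function.comp_apply]
  ring

variable [InnerProductSpace ℝ E]

lemma contDiffAt_supportLine_add_rpow {v : E → ℝ} {x : E} (hv : ContDiffAt ℝ 2 v x)
    (hvx : 0 < v x) (f g : ℝ → ℝ) (q s : ℝ) :
    ContDiffAt ℝ 2 (fun y => supportLine f g s (v y) + v y ^ q) x :=
  (contDiffAt_const.add (contDiffAt_const.mul (hv.sub contDiffAt_const))).add
    (hv.rpow_const_of_ne hvx.ne')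

lemma contDiffAt_cutoffWeight_supportLine {χ v : E → ℝ} {x : E} (hχ : ContDiffAt ℝ 2 χ x)
    (hv : ContDiffAt ℝ 2 v x) (hvx : 0 < v x) (f g : ℝ → ℝ) (q s : ℝ) (m : ℕ) :
    ContDiffAt ℝ 2 (fun y => cutoffWeight χ (supportLine f g s) q m y (v y)) x :=
  (hχ.pow (m + 2)).mul (contDiffAt_supportLine_add_rpow hv hvx f g q s)

variable [FiniteDimensional ℝ E] {Ω : Set E} {V χ : E → ℝ} {x₀ x : E}
  {f g : ℝ → ℝ} {u : ℝ → E → ℝ} {T q c G B τ δ ε t₀ t : ℝ} {m : ℕ}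

lemma laplacian_cutoffWeight_supportLine {v : E → ℝ} (hχ : ContDiffAt ℝ 2 χ x)
    (hv : ContDiffAt ℝ 2 v x) (hvx : 0 < v x) (f g : ℝ → ℝ) (q : ℝ) (m : ℕ) :
    Δ (fun y => cutoffWeight χ (supportLine f g (v x)) q m y (v y)) x =
      χ x ^ (m + 2) * (g (v x) + q * v x ^ (q - 1)) * Δ v x +
      ((f (v x) + v x ^ q) * Δ (fun y => χ y ^ (m + 2)) x +
        2 * (g (v x) + q * v x ^ (q - 1)) * ⟪∇ (fun y => χ y ^ (m + 2)) x, ∇ v x⟫_ℝ +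
        χ x ^ (m + 2) * (q * (q - 1) * v x ^ (q - 2) * ‖∇ v x‖ ^ 2)) := by
  simp only [cutoffWeight]
  rw [laplacian_mul (hχ.pow (m + 2)) (contDiffAt_supportLine_add_rpow hv hvx f g q _),
    laplacian_comp
      ((eventually_gt_nhds hvx).mono fun r hr => hasDerivAt_supportLine_add_rpow f g hr)
      (hasDerivAt_add_mul_rpow (g (v x)) hvx) hv,
    gradient_comp (hasDerivAt_supportLine_add_rpow f g hvx) (hv.differentiableAt two_ne_zero),
    real_inner_smul_right]
  simp only [supportLine]
  ring

lemma IsMonotoneSolution.contDiffAt_timeQuot (hu : IsMonotoneSolution Ω T V f u)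
    (ht : t ∈ Ioo 0 T) (htτ : t + τ ∈ Ioo 0 T) (hx : x ∈ Ω) : ContDiffAt ℝ 2 (timeQuot u τ t) x :=
  ((hu.contDiffAt _ htτ _ hx).sub (hu.contDiffAt _ ht _ hx)).div_const τ

lemma IsMonotoneSolution.contDiffAt_growthDefect {F : E → ℝ → ℝ}
    (hu : IsMonotoneSolution Ω T V f u) (ht : t ∈ Ioo 0 T) (htτ : t + τ ∈ Ioo 0 T) (hx : x ∈ Ω)
    (hF : ContDiffAt ℝ 2 (fun y => F y (u t y)) x) :
    ContDiffAt ℝ 2 (growthDefect u F τ ε t₀ t) x :=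
  (hu.contDiffAt_timeQuot ht htτ hx).sub (contDiffAt_const.mul hF)

lemma IsMonotoneSolution.deriv_sub_laplacian_growthDefect {F : E → ℝ → ℝ} {F' : ℝ}
    (hu : IsMonotoneSolution Ω T V f u) (ht : t ∈ Ioo 0 T) (htτ : t + τ ∈ Ioo 0 T) (hx : x ∈ Ω)
    (hFx : HasDerivAt (F x) F' (u t x)) (hF : ContDiffAt ℝ 2 (fun y => F y (u t y)) x) :
    deriv (fun s => growthDefect u F τ ε t₀ s x) t - Δ (growthDefect u F τ ε t₀ t) x =
      (V x * f (u (t + τ) x) - V x * f (u t x)) / τ + ε * Real.exp (-(t - t₀)) *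
        (F x (u t x) + Δ (fun y => F y (u t y)) x - F' * (Δ (u t) x + V x * f (u t x))) := by
  have hΔ : Δ (growthDefect u F τ ε t₀ t) x =
      Δ (timeQuot u τ t) x - ε * Real.exp (-(t - t₀)) * Δ (fun y => F y (u t y)) x := by
    rw [← smul_eq_mul (ε * Real.exp (-(t - t₀))), ← laplacian_smul _ hF]
    exact (hu.contDiffAt_timeQuot ht htτ hx).laplacian_sub (contDiffAt_const.mul hF)
  rw [hΔ, (hasDerivAt_growthDefect (hu.hasDerivAt_timeQuot ht htτ hx)
      (hu.differentiableAt t ht x hx).hasDerivAt hFx).deriv, hu.laplacian_timeQuot ht htτ hx,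
    hu.deriv_eq t ht x hx, hu.deriv_eq _ htτ x hx]
  ring

lemma IsMonotoneSolution.mul_timeQuot_le (hu : IsMonotoneSolution Ω T V f u)
    (hg : IsSubgradientOn (Ici 0) f g) (ht : t ∈ Ioo 0 T) (htτ : t + τ ∈ Ioo 0 T) (hx : x ∈ Ω)
    (hVx : 0 ≤ V x) (hτ : 0 < τ) :
    V x * g (u t x) * timeQuot u τ t x ≤ (V x * f (u (t + τ) x) - V x * f (u t x)) / τ := by
  have hsub := mul_le_mul_of_nonneg_left
    (hg _ (hu.nonneg t ht x hx) _ (hu.nonneg _ htτ x hx)) hVx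
  rw [timeQuot, ← mul_div_assoc]
  gcongr
  linarith

-- At a zero of the comparison function the increment of `f(u)` can be bounded below through the
-- value of the difference quotient; the terms containing `Δ u` cancel.
lemma IsMonotoneSolution.laplacian_growthDefect_lt_deriv (hu : IsMonotoneSolution Ω T V f u)
    (hg : IsSubgradientOn (Ici 0) f g) (hχ : IsAdaptedCutoff Ω V x₀ c G χ)
    (habs : AbsorbsCutoff f g q c G m B) (hq : 1 < q) (hc : 0 < c) (hVx : 0 ≤ V x)
    (hτ : 0 < τ) (hε : 0 < ε) (ht : t ∈ Ioo 0 T) (htτ : t + τ ∈ Ioo 0 T) (hx : x ∈ tsupport χ)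
    (hχx : 0 < χ x) (hux₀ : 0 < u t x) (hF : 0 < f (u t x) + u t x ^ q)
    (hB : B ≤ cutoffWeight χ f q m x (u t x))
    (hzero : growthDefect u (cutoffWeight χ f q m) τ ε t₀ t x = 0) :
    Δ (growthDefect u (cutoffWeight χ (supportLine f g (u t x)) q m) τ ε t₀ t) x <
      deriv (fun s => growthDefect u (cutoffWeight χ (supportLine f g (u t x)) q m) τ ε t₀ s x)
        t := by
  have hxΩ := hχ.tsupport_subset hx
  have hux := hu.contDiffAt t ht x hxΩ
  have hχ₂ : ContDiffAt ℝ 2 χ x := hχ.contDiff.contDiffAt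
  have hpos := mul_pos (mul_pos hε (Real.exp_pos (-(t - t₀))))
    (hχ.reaction_add_cutoff_terms_pos habs hq hc hVx hx hχx hux₀.le hF hB (∇ (u t) x))
  have hreact := hu.mul_timeQuot_le hg ht htτ hxΩ hVx hτ
  have hquot : timeQuot u τ t x = ε * Real.exp (-(t - t₀)) * cutoffWeight χ f q m x (u t x) :=
    sub_eq_zero.1 hzero
  have hrpow : u t x ^ q = u t x ^ (q - 1) * u t x := by
    rw [← Real.rpow_add_one hux₀.ne', sub_add_cancel]
  have hdiff := hu.deriv_sub_laplacian_growthDefect (ε := ε) (t₀ := t₀) ht htτ hxΩ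
    ((hasDerivAt_supportLine_add_rpow f g hux₀).const_mul (χ x ^ (m + 2)))
    (contDiffAt_cutoffWeight_supportLine hχ₂ hux hux₀ f g q (u t x) m)
  rw [laplacian_cutoffWeight_supportLine hχ₂ hux hux₀, cutoffWeight_supportLine_self] at hdiff
  refine sub_pos.1 (hdiff.symm ▸ ?_)
  rw [hquot] at hreact
  simp only [cutoffWeight] at hreact ⊢
  rw [hrpow] at hpos hreact ⊢
  linear_combination hpos + hreact

lemma IsMonotoneSolution.continuousOn_cutoffWeight (hu : IsMonotoneSolution Ω T V f u)
    (hΩ : IsOpen Ω) (hf : ContinuousOn f (Ici 0)) (hχ : Continuous χ) (hq : 0 ≤ q) (m : ℕ) :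
    ContinuousOn (fun w : ℝ × E => cutoffWeight χ f q m w.2 (u w.1 w.2)) (Ioo 0 T ×ˢ Ω) := by
  have hc := hu.continuousOn hΩ
  exact ((hχ.comp continuous_snd).pow (m + 2)).continuousOn.mul
    ((hf.comp hc fun w hw => hu.nonneg w.1 hw.1 w.2 hw.2).add (hc.rpow_const fun _ _ => .inr hq))

lemma IsMonotoneSolution.continuousOn_growthDefect {F : E → ℝ → ℝ} {S : Set (ℝ × E)}
    (hu : IsMonotoneSolution Ω T V f u) (hΩ : IsOpen Ω)
    (hF : ContinuousOn (fun w : ℝ × E => F w.2 (u w.1 w.2)) (Ioo 0 T ×ˢ Ω))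
    (hS : S ⊆ Ioo 0 T ×ˢ Ω) (hSτ : ∀ w ∈ S, w.1 + τ ∈ Ioo 0 T) :
    ContinuousOn (Function.uncurry (growthDefect u F τ ε t₀)) S := by
  have hc := hu.continuousOn hΩ
  have hshift : ContinuousOn (fun w : ℝ × E => u (w.1 + τ) w.2) S :=
    hc.comp (f := fun w : ℝ × E => (w.1 + τ, w.2)) (by fun_prop) fun w hw =>
      ⟨hSτ w hw, (hS hw).2⟩
  have hexp : ContinuousOn (fun w : ℝ × E => ε * Real.exp (-(w.1 - t₀))) S := by fun_prop
  exact ((hshift.sub (hc.mono hS)).div_const τ).sub (hexp.mul (hF.mono hS))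

lemma growthDefect_mono {X : Type*} {u : ℝ → X → ℝ} {F F' : X → ℝ → ℝ} {x : X} {τ ε t₀ t : ℝ}
    (hε : 0 ≤ ε) (h : F' x (u t x) ≤ F x (u t x)) :
    growthDefect u F τ ε t₀ t x ≤ growthDefect u F' τ ε t₀ t x :=
  sub_le_sub_left (mul_le_mul_of_nonneg_left h (by positivity)) _

lemma le_of_growthDefect_eq_zero {X : Type*} {u : ℝ → X → ℝ} {F : X → ℝ → ℝ} {x : X}
    {B τ δ ε t₀ t : ℝ} (hδ : 0 < δ) (hε : 0 < ε) (hεB : ε * B ≤ δ) (ht : t₀ ≤ t)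
    (hquot : δ ≤ timeQuot u τ t x) (hzero : growthDefect u F τ ε t₀ t x = 0) :
    B ≤ F x (u t x) := by
  have hδF : δ ≤ ε * Real.exp (-(t - t₀)) * F x (u t x) := hquot.trans (sub_eq_zero.1 hzero).le
  have hexp : Real.exp (-(t - t₀)) ≤ 1 := Real.exp_le_one_iff.2 (by linarith)
  have hF : 0 < F x (u t x) := pos_of_mul_pos_right (hδ.trans_le hδF) (by positivity)
  refine le_of_mul_le_mul_left ((hεB.trans hδF).trans ?_) hε
  calc ε * Real.exp (-(t - t₀)) * F x (u t x) ≤ ε * 1 * F x (u t x) := by gcongr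
    _ = ε * F x (u t x) := by rw [mul_one]

lemma IsMonotoneSolution.exists_strict_majorant_growthDefect (hu : IsMonotoneSolution Ω T V f u)
    (hg : IsSubgradientOn (Ici 0) f g) (hχ : IsAdaptedCutoff Ω V x₀ c G χ)
    (habs : AbsorbsCutoff f g q c G m B) (hB : 0 < B) (hq : 1 < q) (hc : 0 < c) (hVx : 0 ≤ V x)
    (hτ : 0 < τ) (hε : 0 < ε) (ht : t ∈ Ioo 0 T) (htτ : t + τ ∈ Ioo 0 T) (hx : x ∈ tsupport χ)
    (hBW : B ≤ cutoffWeight χ f q m x (u t x))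
    (hzero : growthDefect u (cutoffWeight χ f q m) τ ε t₀ t x = 0) :
    tsupport χ ∈ 𝓝 x ∧ ∃ w : ℝ → E → ℝ, w t x = 0 ∧
      (∀ s ∈ Ioo 0 T, ∀ y ∈ tsupport χ, growthDefect u (cutoffWeight χ f q m) τ ε t₀ s y ≤ w s y) ∧
      ContDiffAt ℝ 2 (w t) x ∧ DifferentiableAt ℝ (fun s => w s x) t ∧
      Δ (w t) x < deriv (fun s => w s x) t := by
  have hxΩ := hχ.tsupport_subset hx
  have hs := hu.nonneg t ht x hxΩ
  have hχ₀ := (hχ.mem_Icc x).1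
  have hF : 0 < f (u t x) + u t x ^ q :=
    pos_of_mul_pos_right (hB.trans_le hBW) (pow_nonneg hχ₀ _)
  have hχx : 0 < χ x := hχ₀.lt_of_ne' fun h => by
    rw [cutoffWeight, h, zero_pow (by lia), zero_mul] at hBW
    linarith
  have hux₀ := (habs _ ⟨hχx, (hχ.mem_Icc x).2⟩ _ hs hBW).1
  refine ⟨mem_of_superset (hχ.contDiff.continuous.isOpen_support.mem_nhds hχx.ne')
      (subset_tsupport χ), growthDefect u (cutoffWeight χ (supportLine f g (u t x)) q m) τ ε t₀,
    ?_, fun s hs' y hy => ?_, ?_, ?_, hu.laplacian_growthDefect_lt_deriv hg hχ habs hq hc hVx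
      hτ hε ht htτ hx hχx hux₀ hF hBW hzero⟩
  · rwa [growthDefect, cutoffWeight_supportLine_self]
  · exact growthDefect_mono hε.le (hg.cutoffWeight_supportLine_le hs
      (hu.nonneg s hs' y (hχ.tsupport_subset hy)) (hχ.mem_Icc y).1 q m)
  · exact hu.contDiffAt_growthDefect ht htτ hxΩ (contDiffAt_cutoffWeight_supportLine
      hχ.contDiff.contDiffAt (hu.contDiffAt t ht x hxΩ) hux₀ f g q _ m)
  · exact (hasDerivAt_growthDefect (hu.hasDerivAt_timeQuot ht htτ hxΩ)
      (hu.differentiableAt t ht x hxΩ).hasDerivAt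
      ((hasDerivAt_supportLine_add_rpow f g hux₀).const_mul _)).differentiableAt

lemma IsMonotoneSolution.growthDefect_pos (hu : IsMonotoneSolution Ω T V f u) (hΩ : IsOpen Ω)
    (hf : ContinuousOn f (Ici 0)) (hg : IsSubgradientOn (Ici 0) f g) (hV : ∀ x ∈ Ω, 0 ≤ V x)
    (hχ : IsAdaptedCutoff Ω V x₀ c G χ) (habs : AbsorbsCutoff f g q c G m B) (hB : 0 < B)
    (hq : 1 < q) (hc : 0 < c) (ht₀ : 0 < t₀) (hτ : 0 < τ) (hδ : 0 < δ) (hε : 0 < ε)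
    (hεB : ε * B ≤ δ) (hstart : ∀ x ∈ tsupport χ, ε * cutoffWeight χ f q m x (u t₀ x) < δ)
    (hgrowth : ∀ t ∈ Ico t₀ (T - τ), ∀ x ∈ tsupport χ, δ ≤ timeQuot u τ t x) :
    ∀ t ∈ Ico t₀ (T - τ), ∀ x ∈ tsupport χ,
      0 < growthDefect u (cutoffWeight χ f q m) τ ε t₀ t x := by
  intro t₁ ht₁
  have hmem : ∀ t ∈ Icc t₀ t₁, t ∈ Ioo 0 T ∧ t + τ ∈ Ioo 0 T := fun t ht =>
    ⟨⟨by linarith [ht.1], by linarith [ht.2, ht₁.2]⟩,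
      by linarith [ht.1], by linarith [ht.2, ht₁.2]⟩
  refine pos_of_strict_supersolution hχ.isCompact_tsupport
    (hu.continuousOn_growthDefect hΩ
      (hu.continuousOn_cutoffWeight hΩ hf hχ.contDiff.continuous (by linarith) m)
      (fun w hw => ⟨(hmem _ hw.1).1, hχ.tsupport_subset hw.2⟩) fun w hw => (hmem _ hw.1).2)
    (fun x hx => ?_) (fun t ht x hx hzero => ?_) t₁ ⟨ht₁.1, le_rfl⟩
  · have := hgrowth t₀ ⟨le_rfl, ht₁.1.trans_lt ht₁.2⟩ x hx
    have := hstart x hx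
    rw [growthDefect, sub_self, neg_zero, Real.exp_zero, mul_one]
    linarith
  · obtain ⟨htT, htτ⟩ := hmem t (Ioc_subset_Icc_self ht)
    have hBW : B ≤ cutoffWeight χ f q m x (u t x) := le_of_growthDefect_eq_zero hδ hε hεB
      ht.1.le (hgrowth t ⟨ht.1.le, ht.2.trans_lt ht₁.2⟩ x hx) hzero
    obtain ⟨hnhds, w, hwx, hle, hw⟩ := hu.exists_strict_majorant_growthDefect hg hχ habs hB hq hc
      (hV x (hχ.tsupport_subset hx)) hτ hε htT htτ hx hBW hzero
    exact ⟨hnhds, w, hwx, fun s hs => hle s (hmem s ⟨hs.1, hs.2.trans ht.2⟩).1, hw⟩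

lemma IsMonotoneSolution.exists_forall_mul_le_deriv (hu : IsMonotoneSolution Ω T V f u)
    (hΩ : IsOpen Ω) (hfc : ContinuousOn f (Ici 0)) (hf : ∀ s ≥ 0, 0 ≤ f s)
    (hg : IsSubgradientOn (Ici 0) f g) (hV : ∀ x ∈ Ω, 0 ≤ V x)
    (hχ : IsAdaptedCutoff Ω V x₀ c G χ) (habs : AbsorbsCutoff f g q c G m B) (hB : 0 < B)
    (hq : 1 < q) (hc : 0 < c) (ht₀ : t₀ ∈ Ioo 0 T) (hgrowth : UniformGrowthOn u T t₀ (tsupport χ)) :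
    ∃ ε > 0, ∀ x, χ x = 1 → ∀ t ∈ Ico t₀ T, ε * f (u t x) ≤ deriv (fun s => u s x) t := by
  obtain ⟨δ, hδ, hgrowth⟩ := hgrowth
  have hW : ContinuousOn (fun x => cutoffWeight χ f q m x (u t₀ x)) (tsupport χ) :=
    (hu.continuousOn_cutoffWeight hΩ hfc hχ.contDiff.continuous (by linarith) m).comp
      (f := fun x => (t₀, x)) (by fun_prop) fun x hx => ⟨ht₀, hχ.tsupport_subset hx⟩
  obtain ⟨K, hK⟩ := hχ.isCompact_tsupport.bddAbove_image hW
  have hden : 0 < B + |K| + 1 := by positivity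
  set ε := δ / (B + |K| + 1)
  have hε : 0 < ε := div_pos hδ hden
  have hεδ : ε * (B + |K| + 1) = δ := div_mul_cancel₀ _ hden.ne'
  have hεK := mul_nonneg hε.le (abs_nonneg K)
  refine ⟨ε * Real.exp (-(T - t₀)), by positivity, fun x hx t ht => ?_⟩
  have hxS : x ∈ tsupport χ := subset_tsupport χ (by simp [hx])
  have htT : t ∈ Ioo 0 T := ⟨ht₀.1.trans_le ht.1, ht.2⟩
  have hs := hu.nonneg t htT x (hχ.tsupport_subset hxS)
  refine ge_of_tendsto (hu.tendsto_timeQuot htT (hχ.tsupport_subset hxS)) ?_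
  filter_upwards [hgrowth, Ioo_mem_nhdsGT (sub_pos.2 ht.2)] with τ hgrowth hτ
  have hpos := hu.growthDefect_pos hΩ hfc hg hV hχ habs hB hq hc ht₀.1 hτ.1 hδ hε
    (by linarith) (fun x hx => ?_) hgrowth t ⟨ht.1, by linarith [hτ.2]⟩ x hxS
  · have hexp : Real.exp (-(T - t₀)) ≤ Real.exp (-(t - t₀)) :=
      Real.exp_le_exp.2 (by linarith [ht.2])
    have hfF : f (u t x) ≤ cutoffWeight χ f q m x (u t x) := by
      rw [cutoffWeight, hx, one_pow, one_mul]
      exact le_add_of_nonneg_right (Real.rpow_nonneg hs q)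
    exact (mul_le_mul (mul_le_mul_of_nonneg_left hexp hε.le) hfF (hf _ hs) (by positivity)).trans
      (sub_pos.1 hpos).le
  · have hWK : cutoffWeight χ f q m x (u t₀ x) ≤ |K| := (hK ⟨x, hx, rfl⟩).trans (le_abs_self K)
    linarith [mul_le_mul_of_nonneg_left hWK hε.le, mul_pos hε hB]

end GrowthComparison

section BlowupRate

variable {y y' : ℝ → ℝ} {c p s₀ a b t₀ t T : ℝ}

lemma mul_sub_le_rpow_of_mul_rpow_le_deriv (hp : 1 ≤ p) (hab : a ≤ b)
    (hy : ∀ r ∈ Icc a b, HasDerivAt y (y' r) r) (hpos : ∀ r ∈ Icc a b, 0 < y r)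
    (hgrowth : ∀ r ∈ Icc a b, c * y r ^ p ≤ y' r) : (p - 1) * c * (b - a) ≤ y a ^ (1 - p) := by
  have hderiv : ∀ r ∈ Icc a b, HasDerivAt (fun r => y r ^ (1 - p) + (p - 1) * c * r)
      (y' r * (1 - p) * y r ^ (-p) + (p - 1) * c) r := fun r hr =>
    (((hy r hr).rpow_const (.inl (hpos r hr).ne')).add
      ((hasDerivAt_id r).const_mul ((p - 1) * c))).congr_deriv (by ring_nf)
  have hanti : AntitoneOn (fun r => y r ^ (1 - p) + (p - 1) * c * r) (Icc a b) := by
    refine antitoneOn_of_hasDerivWithinAt_nonpos (convex_Icc a b)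
      (fun r hr => (hderiv r hr).continuousAt.continuousWithinAt)
      (fun r hr => (hderiv r (interior_subset hr)).hasDerivWithinAt) fun r hr => ?_
    have hr := interior_subset hr
    have hinv : y r ^ p * y r ^ (-p) = 1 := by
      rw [← Real.rpow_add (hpos r hr), add_neg_cancel, Real.rpow_zero]
    have hc : c ≤ y' r * y r ^ (-p) := by
      calc c = c * y r ^ p * y r ^ (-p) := by rw [mul_assoc, hinv, mul_one]
        _ ≤ y' r * y r ^ (-p) :=
          mul_le_mul_of_nonneg_right (hgrowth r hr) (Real.rpow_nonneg (hpos r hr).le _)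
    linarith [mul_le_mul_of_nonneg_left hc (sub_nonneg.2 hp)]
  have hends := hanti (left_mem_Icc.2 hab) (right_mem_Icc.2 hab) hab
  dsimp only at hends
  linarith [Real.rpow_nonneg (hpos b (right_mem_Icc.2 hab)).le (1 - p)]

lemma le_rpow_mul_rpow_of_mul_rpow_le_deriv (hp : 1 < p) (hc : 0 < c) (htT : t < T)
    (hy : ∀ r ∈ Ico t T, HasDerivAt y (y' r) r) (hpos : ∀ r ∈ Ico t T, 0 < y r)
    (hgrowth : ∀ r ∈ Ico t T, c * y r ^ p ≤ y' r) :
    y t ≤ ((p - 1) * c) ^ (-(1 / (p - 1))) * (T - t) ^ (-(1 / (p - 1))) := by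
  have hp1 : 0 < p - 1 := sub_pos.2 hp
  have hlim : (p - 1) * c * (T - t) ≤ y t ^ (1 - p) := by
    have hcont : Continuous fun b => (p - 1) * c * (b - t) := by fun_prop
    refine le_of_tendsto ((hcont.tendsto T).mono_left nhdsWithin_le_nhds : Tendsto _ (𝓝[<] T) _) ?_
    filter_upwards [Ioo_mem_nhdsLT htT] with b hb
    have hsub : Icc t b ⊆ Ico t T := Icc_subset_Ico_right hb.2
    exact mul_sub_le_rpow_of_mul_rpow_le_deriv hp.le hb.1.le (fun r hr => hy r (hsub hr))
      (fun r hr => hpos r (hsub hr)) fun r hr => hgrowth r (hsub hr)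
  have hexp : (1 - p) * -(1 / (p - 1)) = 1 := by field_simp; ring
  calc y t = (y t ^ (1 - p)) ^ (-(1 / (p - 1))) := by
        rw [← Real.rpow_mul (hpos t ⟨le_rfl, htT⟩).le, hexp, Real.rpow_one]
    _ ≤ ((p - 1) * c * (T - t)) ^ (-(1 / (p - 1))) :=
        Real.rpow_le_rpow_of_nonpos (mul_pos (mul_pos hp1 hc) (sub_pos.2 htT)) hlim
          (neg_nonpos.2 (one_div_pos.2 hp1).le)
    _ = _ := Real.mul_rpow (mul_pos hp1 hc).le (sub_pos.2 htT).le

lemma le_max_mul_rpow_of_mul_rpow_le_deriv (hm : MonotoneOn y (Ico t₀ T)) (hp : 1 < p) (hc : 0 < c)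
    (hs₀ : 0 < s₀) (ht₀ : 0 ≤ t₀) (hy : ∀ r ∈ Ico t₀ T, HasDerivAt y (y' r) r)
    (hgrowth : ∀ r ∈ Ico t₀ T, s₀ ≤ y r → c * y r ^ p ≤ y' r) (ht : t ∈ Ico t₀ T) :
    y t ≤ max (((p - 1) * c) ^ (-(1 / (p - 1)))) (s₀ * T ^ (1 / (p - 1))) *
      (T - t) ^ (-(1 / (p - 1))) := by
  have hTt : 0 < T - t := sub_pos.2 ht.2
  have hT : 0 < T := ht₀.trans_lt (ht.1.trans_lt ht.2)
  have hα : 0 < 1 / (p - 1) := one_div_pos.2 (sub_pos.2 hp)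
  have hrate := Real.rpow_nonneg hTt.le (-(1 / (p - 1)))
  rcases le_or_gt (y t) s₀ with hsmall | hlarge
  · have hrate_le : T ^ (-(1 / (p - 1))) ≤ (T - t) ^ (-(1 / (p - 1))) :=
      Real.rpow_le_rpow_of_nonpos hTt (by linarith [ht.1]) (by linarith)
    calc y t ≤ s₀ := hsmall
      _ = s₀ * T ^ (1 / (p - 1)) * T ^ (-(1 / (p - 1))) := by
          rw [mul_assoc, ← Real.rpow_add hT, add_neg_cancel, Real.rpow_zero, mul_one]
      _ ≤ s₀ * T ^ (1 / (p - 1)) * (T - t) ^ (-(1 / (p - 1))) :=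
          mul_le_mul_of_nonneg_left hrate_le (by positivity)
      _ ≤ _ := mul_le_mul_of_nonneg_right (le_max_right _ _) hrate
  · have hsub : Ico t T ⊆ Ico t₀ T := Ico_subset_Ico_left ht.1
    have hs₀_le : ∀ r ∈ Ico t T, s₀ ≤ y r := fun r hr =>
      hlarge.le.trans (hm ht (hsub hr) hr.1)
    exact (le_rpow_mul_rpow_of_mul_rpow_le_deriv hp hc ht.2 (fun r hr => hy r (hsub hr))
      (fun r hr => hs₀.trans_le (hs₀_le r hr))
      fun r hr => hgrowth r (hsub hr) (hs₀_le r hr)).trans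
        (mul_le_mul_of_nonneg_right (le_max_left _ _) hrate)

end BlowupRate

section TypeIBarrier

/-- The base `β (r² - |x - x₀|²)² + (T - t)` of the barrier `A * base ^ (-α)`. On the sphere of
radius `r` about `x₀` the barrier is the type I rate `A * (T - t) ^ (-α)`, while inside the sphere
it stays bounded as `t` tends to `T`. -/
def barrierBase (β r T : ℝ) (x₀ : E) (t : ℝ) (x : E) : ℝ :=
  β * (r ^ 2 - ‖x - x₀‖ ^ 2) ^ 2 + (T - t)

variable {α β η p r t t₀ A A₀ C D T : ℝ} {f : ℝ → ℝ} {x x₀ : E}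

lemma barrierBase_pos (hβ : 0 ≤ β) (ht : t < T) : 0 < barrierBase β r T x₀ t x :=
  add_pos_of_nonneg_of_pos (mul_nonneg hβ (sq_nonneg _)) (sub_pos.2 ht)

lemma norm_sub_sq_le_of_mem_closedBall (hx : x ∈ closedBall x₀ r) : ‖x - x₀‖ ^ 2 ≤ r ^ 2 :=
  pow_le_pow_left₀ (norm_nonneg _) (mem_closedBall_iff_norm.1 hx) 2

lemma barrierBase_le_two_mul (hβ : 0 ≤ β) (hβT : β * (r ^ 2) ^ 2 ≤ T - t₀) (ht : t₀ ≤ t)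
    (hx : x ∈ closedBall x₀ r) : barrierBase β r T x₀ t x ≤ 2 * (T - t₀) := by
  have hsq : β * (r ^ 2 - ‖x - x₀‖ ^ 2) ^ 2 ≤ β * (r ^ 2) ^ 2 :=
    mul_le_mul_of_nonneg_left (pow_le_pow_left₀
      (sub_nonneg.2 (norm_sub_sq_le_of_mem_closedBall hx)) (sub_le_self _ (sq_nonneg _)) 2) hβ
  rw [barrierBase]
  linarith

lemma hasDerivAt_barrierBase_rpow (hβ : 0 ≤ β) (ht : t < T) (A α : ℝ) :
    HasDerivAt (fun t => A * barrierBase β r T x₀ t x ^ (-α))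
      (α * A * barrierBase β r T x₀ t x ^ (-α - 1)) t := by
  have hbase : HasDerivAt (fun t => barrierBase β r T x₀ t x) (-1) t :=
    ((hasDerivAt_id t).const_sub T).const_add _
  exact ((hbase.rpow_const (p := -α) (.inl (barrierBase_pos hβ ht).ne')).const_mul A).congr_deriv
    (by ring)

lemma hasDerivAt_mul_sq_add (β R τ s : ℝ) :
    HasDerivAt (fun s => β * (R - s) ^ 2 + τ) (-2 * β * (R - s)) s :=
  (((((hasDerivAt_id' s).const_sub R).pow 2).const_mul β).add_const τ).congr_deriv
    (by norm_num; ring)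

lemma laplacian_barrierBase_rpow [InnerProductSpace ℝ E] [FiniteDimensional ℝ E] (hβ : 0 ≤ β)
    (ht : t < T) (A α : ℝ) :
    Δ (fun x => A * barrierBase β r T x₀ t x ^ (-α)) x =
      4 * (2 * A * α * β * (2 * (α + 1) * barrierBase β r T x₀ t x ^ (-α - 2) *
        (β * (r ^ 2 - ‖x - x₀‖ ^ 2) ^ 2) - barrierBase β r T x₀ t x ^ (-α - 1))) *
        ‖x - x₀‖ ^ 2 +
      2 * dim * (2 * A * α * β * (r ^ 2 - ‖x - x₀‖ ^ 2) *
        barrierBase β r T x₀ t x ^ (-α - 1)) := by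
  have hpos (s : ℝ) : 0 < β * (r ^ 2 - s) ^ 2 + (T - t) :=
    add_pos_of_nonneg_of_pos (mul_nonneg hβ (sq_nonneg _)) (sub_pos.2 ht)
  have hrpow (γ s : ℝ) := (hasDerivAt_mul_sq_add β (r ^ 2) (T - t) s).rpow_const (p := γ)
    (.inl (hpos s).ne')
  refine laplacian_comp_norm_sub_sq
    (φ := fun s => A * (β * (r ^ 2 - s) ^ 2 + (T - t)) ^ (-α))
    (φ' := fun s => 2 * A * α * β * (r ^ 2 - s) * (β * (r ^ 2 - s) ^ 2 + (T - t)) ^ (-α - 1))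
    (.of_forall fun s => ((hrpow (-α) s).const_mul A).congr_deriv (by ring)) ?_
  refine ((((hasDerivAt_id' _).const_sub (r ^ 2)).const_mul (2 * A * α * β)).mul
    (hrpow (-α - 1) _)).congr_deriv ?_
  rw [barrierBase, show -α - 2 = -α - 1 - 1 by ring]
  ring

lemma laplacian_barrierBase_rpow_le [InnerProductSpace ℝ E] [FiniteDimensional ℝ E]
    (hα : 0 ≤ α) (hA : 0 ≤ A) (hβ : 0 ≤ β) (hβr : β * r ^ 2 * (4 * dim + 16 * (α + 1)) ≤ 1 / 4)
    (ht : t < T) (hx : x ∈ closedBall x₀ r) :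
    Δ (fun x => A * barrierBase β r T x₀ t x ^ (-α)) x ≤
      α * A / 4 * barrierBase β r T x₀ t x ^ (-α - 1) := by
  rw [laplacian_barrierBase_rpow hβ ht]
  have hρ := norm_sub_sq_le_of_mem_closedBall hx
  have hψ : 0 < barrierBase β r T x₀ t x := barrierBase_pos hβ ht
  have hψ_le : β * (r ^ 2 - ‖x - x₀‖ ^ 2) ^ 2 ≤ barrierBase β r T x₀ t x :=
    le_add_of_nonneg_right (sub_pos.2 ht).le
  set ψ := barrierBase β r T x₀ t x
  set ρ := ‖x - x₀‖ ^ 2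
  have hρ₀ : 0 ≤ ρ := sq_nonneg _
  have hP : 0 < ψ ^ (-α - 1) := Real.rpow_pos_of_pos hψ _
  have hsecond : ψ ^ (-α - 2) * (β * (r ^ 2 - ρ) ^ 2) ≤ ψ ^ (-α - 1) := by
    calc ψ ^ (-α - 2) * (β * (r ^ 2 - ρ) ^ 2) ≤ ψ ^ (-α - 2) * ψ :=
          mul_le_mul_of_nonneg_left hψ_le (Real.rpow_nonneg hψ.le _)
      _ = ψ ^ (-α - 1) := by rw [← Real.rpow_add_one hψ.ne']; ring_nf
  calc _ ≤ 4 * (2 * A * α * β * (2 * (α + 1) * ψ ^ (-α - 1))) * r ^ 2 +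
        2 * dim * (2 * A * α * β * r ^ 2 * ψ ^ (-α - 1)) := by
        gcongr ?_ + 2 * dim * (2 * A * α * β * ?_ * _)
        · refine mul_le_mul ?_ hρ hρ₀ (by positivity)
          gcongr
          linarith [mul_le_mul_of_nonneg_left hsecond (by positivity : 0 ≤ 2 * (α + 1))]
        · linarith
    _ = α * A * ψ ^ (-α - 1) * (β * r ^ 2 * (4 * dim + 16 * (α + 1))) := by ring
    _ ≤ α * A * ψ ^ (-α - 1) * (1 / 4) := by gcongr
    _ = α * A / 4 * ψ ^ (-α - 1) := by ring

lemma contDiff_barrierBase_rpow [InnerProductSpace ℝ E] (hβ : 0 ≤ β) (ht : t < T) (A α : ℝ) :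
    ContDiff ℝ 2 fun x => A * barrierBase β r T x₀ t x ^ (-α) := by
  have hsq : ContDiff ℝ 2 fun x : E => ‖x - x₀‖ ^ 2 :=
    (contDiff_id.sub contDiff_const).norm_sq ℝ
  have hbase : ContDiff ℝ 2 fun x => barrierBase β r T x₀ t x :=
    (contDiff_const.mul ((contDiff_const.sub hsq).pow 2)).add contDiff_const
  exact contDiff_const.mul (hbase.rpow_const_of_ne fun x => (barrierBase_pos hβ ht).ne')

lemma continuousOn_barrierBase_rpow (hβ : 0 ≤ β) (A α : ℝ) :
    ContinuousOn (Function.uncurry fun t x => A * barrierBase β r T x₀ t x ^ (-α))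
      (Iio T ×ˢ univ) := by
  have hbase : Continuous fun w : ℝ × E => barrierBase β r T x₀ w.1 w.2 := by
    unfold barrierBase
    fun_prop
  exact continuousOn_const.mul
    (hbase.continuousOn.rpow_const fun w hw => .inl (barrierBase_pos hβ hw.1).ne')

lemma reaction_barrier_le {v ψ : ℝ} (hα : 0 ≤ α) (hαp : α * p = α + 1) (hA : 0 ≤ A) (hC : 0 ≤ C)
    (hψ : 0 < ψ) (hψD : ψ ≤ D) (hη : 0 ≤ η) (hvη : v ≤ η) (hf : ∀ s ≥ 0, 0 ≤ f s)
    (hfC : ∀ s ≥ 0, f s ≤ C * (1 + s ^ p)) :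
    v * f (A * ψ ^ (-α)) ≤ η * (C * (D ^ (α + 1) + A ^ p)) * ψ ^ (-α - 1) := by
  have hs : 0 ≤ A * ψ ^ (-α) := by positivity
  have hpow : (A * ψ ^ (-α)) ^ p = A ^ p * ψ ^ (-α - 1) := by
    rw [Real.mul_rpow hA (by positivity), ← Real.rpow_mul hψ.le, neg_mul, hαp, neg_add']
  have hone : 1 ≤ D ^ (α + 1) * ψ ^ (-α - 1) := by
    calc 1 = ψ ^ (α + 1) * ψ ^ (-α - 1) := by
          rw [← Real.rpow_add hψ, ← neg_add', add_neg_cancel, Real.rpow_zero]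
      _ ≤ D ^ (α + 1) * ψ ^ (-α - 1) := by gcongr
  calc v * f (A * ψ ^ (-α)) ≤ η * f (A * ψ ^ (-α)) := mul_le_mul_of_nonneg_right hvη (hf _ hs)
    _ ≤ η * (C * (1 + A ^ p * ψ ^ (-α - 1))) := by
        rw [← hpow]
        exact mul_le_mul_of_nonneg_left (hfC _ hs) hη
    _ ≤ η * (C * (D ^ (α + 1) * ψ ^ (-α - 1) + A ^ p * ψ ^ (-α - 1))) := by gcongr
    _ = η * (C * (D ^ (α + 1) + A ^ p)) * ψ ^ (-α - 1) := by ring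

lemma lt_barrier_of_le_rate (hα : 0 ≤ α) (hA : 2 ^ α * A₀ < A) (hA_nonneg : 0 ≤ A) (hβ : 0 ≤ β)
    (hβT : β * (r ^ 2) ^ 2 ≤ T - t₀) (ht₀ : t₀ < T) (hx : x ∈ closedBall x₀ r) :
    A₀ * (T - t₀) ^ (-α) < A * barrierBase β r T x₀ t₀ x ^ (-α) := by
  have hTt : 0 < T - t₀ := sub_pos.2 ht₀
  have hA' : A₀ < A * 2 ^ (-α) := by
    rw [Real.rpow_neg two_pos.le, ← div_eq_mul_inv, lt_div_iff₀ (by positivity), mul_comm]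
    exact hA
  calc A₀ * (T - t₀) ^ (-α) < A * 2 ^ (-α) * (T - t₀) ^ (-α) := by gcongr
    _ = A * (2 * (T - t₀)) ^ (-α) := by rw [Real.mul_rpow two_pos.le hTt.le, mul_assoc]
    _ ≤ A * barrierBase β r T x₀ t₀ x ^ (-α) := mul_le_mul_of_nonneg_left
        (Real.rpow_le_rpow_of_nonpos (barrierBase_pos hβ ht₀)
          (barrierBase_le_two_mul hβ hβT le_rfl hx) (neg_nonpos.2 hα)) hA_nonneg

lemma mem_ball_of_barrier_le_rate (hA : A₀ < A) (ht : t < T) (hx : x ∈ closedBall x₀ r)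
    (h : A * barrierBase β r T x₀ t x ^ (-α) ≤ A₀ * (T - t) ^ (-α)) : x ∈ ball x₀ r := by
  refine mem_ball_iff_norm.2 (lt_of_le_of_ne (mem_closedBall_iff_norm.1 hx) fun hr => ?_)
  have hbase : barrierBase β r T x₀ t x = T - t := by simp [barrierBase, hr]
  rw [hbase] at h
  exact absurd (le_of_mul_le_mul_right h (Real.rpow_pos_of_pos (sub_pos.2 ht) _)) hA.not_ge

lemma exists_barrier_parameter (α : ℝ) (hα : 0 ≤ α) (hr : 0 < r) (hD : 0 < D) (d : ℕ) :
    ∃ β > 0, β * r ^ 2 * (4 * d + 16 * (α + 1)) ≤ 1 / 4 ∧ β * (r ^ 2) ^ 2 ≤ D := by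
  have hden : 0 < r ^ 2 * (4 * d + 16 * (α + 1)) := by positivity
  refine ⟨min (1 / 4 / (r ^ 2 * (4 * d + 16 * (α + 1)))) (D / (r ^ 2) ^ 2),
    lt_min (by positivity) (by positivity), ?_, ?_⟩
  · rw [mul_assoc, ← le_div_iff₀ hden]
    exact min_le_left _ _
  · rw [← le_div_iff₀ (by positivity)]
    exact min_le_right _ _

lemma barrier_le_of_norm_sub_le (hα : 0 ≤ α) (hA : 0 ≤ A) (hβ : 0 < β) (hr : 0 < r) (ht : t ≤ T)
    (hx : ‖x - x₀‖ ≤ r / 2) :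
    A * barrierBase β r T x₀ t x ^ (-α) ≤ A * (β * (3 / 4 * r ^ 2) ^ 2) ^ (-α) := by
  have hgap : 3 / 4 * r ^ 2 ≤ r ^ 2 - ‖x - x₀‖ ^ 2 := by
    have hsq := pow_le_pow_left₀ (norm_nonneg _) hx 2
    linarith
  have hbase : β * (3 / 4 * r ^ 2) ^ 2 ≤ barrierBase β r T x₀ t x :=
    (mul_le_mul_of_nonneg_left (pow_le_pow_left₀ (by positivity) hgap 2) hβ.le).trans
      (le_add_of_nonneg_right (sub_nonneg.2 ht))
  exact mul_le_mul_of_nonneg_left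
    (Real.rpow_le_rpow_of_nonpos (by positivity) hbase (neg_nonpos.2 hα)) hA

variable [InnerProductSpace ℝ E] [FiniteDimensional ℝ E] {Ω : Set E} {V : E → ℝ} {u : ℝ → E → ℝ}

lemma IsMonotoneSolution.laplacian_barrier_sub_lt_deriv (hu : IsMonotoneSolution Ω T V f u)
    (hα : 0 < α) (hαp : α * p = α + 1) (hC : 0 ≤ C) (hf : ∀ s ≥ 0, 0 ≤ f s)
    (hfC : ∀ s ≥ 0, f s ≤ C * (1 + s ^ p)) (hη : 0 ≤ η) (hVη : V x ≤ η) (hA : 0 ≤ A)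
    (hηA : η * (C * (D ^ (α + 1) + A ^ p)) < 3 / 4 * (α * A)) (hβ : 0 ≤ β)
    (hβr : β * r ^ 2 * (4 * dim + 16 * (α + 1)) ≤ 1 / 4) (ht : t ∈ Ioo 0 T) (hxΩ : x ∈ Ω)
    (hx : x ∈ closedBall x₀ r) (hD : barrierBase β r T x₀ t x ≤ D)
    (hux : u t x = A * barrierBase β r T x₀ t x ^ (-α)) :
    Δ (fun x => A * barrierBase β r T x₀ t x ^ (-α) - u t x) x <
      deriv (fun t => A * barrierBase β r T x₀ t x ^ (-α) - u t x) t := by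
  have hlap : Δ (fun x => A * barrierBase β r T x₀ t x ^ (-α) - u t x) x =
      Δ (fun x => A * barrierBase β r T x₀ t x ^ (-α)) x - Δ (u t) x :=
    (contDiff_barrierBase_rpow hβ ht.2 A α).contDiffAt.laplacian_sub (hu.contDiffAt t ht x hxΩ)
  have hderiv := ((hasDerivAt_barrierBase_rpow (x₀ := x₀) (r := r) (x := x) hβ ht.2 A α).sub
    (hu.differentiableAt t ht x hxΩ).hasDerivAt).deriv
  have hreaction : V x * f (u t x) ≤ _ := hux ▸ reaction_barrier_le hα.le hαp hA hC
    (barrierBase_pos hβ ht.2) hD hη hVη hf hfC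
  rw [hlap, show deriv (fun t => A * barrierBase β r T x₀ t x ^ (-α) - u t x) t = _ from hderiv,
    hu.deriv_eq t ht x hxΩ]
  have hspace := laplacian_barrierBase_rpow_le hα.le hA hβ hβr ht.2 hx
  have hP := mul_lt_mul_of_pos_right hηA
    (Real.rpow_pos_of_pos (barrierBase_pos (x₀ := x₀) (r := r) (x := x) hβ ht.2) (-α - 1))
  linarith

lemma IsMonotoneSolution.lt_barrier (hu : IsMonotoneSolution Ω T V f u) (hΩ : IsOpen Ω)
    (hα : 0 < α) (hαp : α * p = α + 1) (hC : 0 ≤ C) (hf : ∀ s ≥ 0, 0 ≤ f s)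
    (hfC : ∀ s ≥ 0, f s ≤ C * (1 + s ^ p)) (ht₀ : t₀ ∈ Ioo 0 T) (hball : closedBall x₀ r ⊆ Ω)
    (hη : 0 ≤ η) (hVη : ∀ x ∈ closedBall x₀ r, V x ≤ η) (hA₀ : 0 ≤ A₀)
    (hrate : ∀ t ∈ Ico t₀ T, ∀ x ∈ closedBall x₀ r, u t x ≤ A₀ * (T - t) ^ (-α))
    (hA : 2 ^ α * A₀ < A)
    (hηA : η * (C * ((2 * (T - t₀)) ^ (α + 1) + A ^ p)) < 3 / 4 * (α * A)) (hβ : 0 ≤ β)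
    (hβr : β * r ^ 2 * (4 * dim + 16 * (α + 1)) ≤ 1 / 4) (hβT : β * (r ^ 2) ^ 2 ≤ T - t₀)
    (ht : t ∈ Ico t₀ T) (hx : x ∈ closedBall x₀ r) :
    u t x < A * barrierBase β r T x₀ t x ^ (-α) := by
  have hA₀A : A₀ < A :=
    (le_mul_of_one_le_left hA₀ (Real.one_le_rpow one_le_two hα.le)).trans_lt hA
  have hA_pos : 0 < A := hA₀.trans_lt hA₀A
  refine sub_pos.1 (pos_of_strict_supersolution
    (z := fun t x => A * barrierBase β r T x₀ t x ^ (-α) - u t x) (isCompact_closedBall x₀ r)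
    (((continuousOn_barrierBase_rpow hβ A α).mono ?_).sub ((hu.continuousOn hΩ).mono ?_))
    (fun x hx => ?_) (fun s hs x hx hzero => ?_) t ⟨ht.1, le_rfl⟩ x hx)
  · exact fun w hw => ⟨hw.1.2.trans_lt ht.2, mem_univ _⟩
  · exact prod_mono (fun s hs => ⟨ht₀.1.trans_le hs.1, hs.2.trans_lt ht.2⟩) hball
  · exact sub_pos.2 ((hrate t₀ ⟨le_rfl, ht₀.2⟩ x hx).trans_lt
      (lt_barrier_of_le_rate hα.le hA hA_pos.le hβ hβT ht₀.2 hx))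
  · have hsT : s ∈ Ioo 0 T := ⟨ht₀.1.trans hs.1, hs.2.trans_lt ht.2⟩
    have hux := (sub_eq_zero.1 hzero).symm
    have hxball : x ∈ ball x₀ r := mem_ball_of_barrier_le_rate hA₀A hsT.2 hx
      (hux ▸ hrate s ⟨hs.1.le, hsT.2⟩ x hx)
    refine ⟨mem_of_superset (isOpen_ball.mem_nhds hxball) ball_subset_closedBall, _, hzero,
      fun _ _ _ _ => le_rfl, ?_, ?_, ?_⟩
    · exact (contDiff_barrierBase_rpow hβ hsT.2 A α).contDiffAt.sub
        (hu.contDiffAt s hsT x (hball hx))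
    · exact (hasDerivAt_barrierBase_rpow hβ hsT.2 A α).differentiableAt.sub
        (hu.differentiableAt s hsT x (hball hx))
    · exact hu.laplacian_barrier_sub_lt_deriv hα hαp hC hf hfC hη (hVη x hx) hA_pos.le hηA hβ hβr
        hsT (hball hx) hx (barrierBase_le_two_mul hβ hβT hs.1.le hx) hux

lemma IsMonotoneSolution.exists_forall_le_of_le_rate (hu : IsMonotoneSolution Ω T V f u)
    (hΩ : IsOpen Ω) (hα : 0 < α) (hαp : α * p = α + 1) (hC : 0 < C) (hf : ∀ s ≥ 0, 0 ≤ f s)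
    (hfC : ∀ s ≥ 0, f s ≤ C * (1 + s ^ p)) (ht₀ : t₀ ∈ Ioo 0 T) (hx₀ : x₀ ∈ Ω)
    (hV : ContinuousAt V x₀) (hVx₀ : V x₀ = 0) (hA₀ : 0 ≤ A₀)
    (hrate : ∀ᶠ x in 𝓝 x₀, ∀ t ∈ Ico t₀ T, u t x ≤ A₀ * (T - t) ^ (-α)) :
    ∃ r > 0, ∃ M > 0, ∀ t ∈ Ico t₀ T, ∀ x, ‖x - x₀‖ < r → u t x ≤ M := by
  have hTt : 0 < T - t₀ := sub_pos.2 ht₀.2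
  set A := 2 ^ α * A₀ + 1
  have hA : 0 < A := by positivity
  set W := C * ((2 * (T - t₀)) ^ (α + 1) + A ^ p)
  have hW : 0 < W := by positivity
  have hηA : α * A / 2 / W * W < 3 / 4 * (α * A) := by
    rw [div_mul_cancel₀ _ hW.ne']
    linarith [mul_pos hα hA]
  have hVη : ∀ᶠ x in 𝓝 x₀, V x < α * A / 2 / W :=
    hV.eventually_lt_const (by rw [hVx₀]; positivity)
  obtain ⟨r, hr, hball⟩ :=
    nhds_basis_closedBall.mem_iff.1 ((hΩ.eventually_mem hx₀).and (hVη.and hrate))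
  obtain ⟨β, hβ, hβr, hβT⟩ := exists_barrier_parameter α hα.le hr hTt (Module.finrank ℝ E)
  refine ⟨r / 2, by positivity, A * (β * (3 / 4 * r ^ 2) ^ 2) ^ (-α), by positivity,
    fun t ht x hx => ?_⟩
  have hlt := hu.lt_barrier hΩ hα hαp hC.le hf hfC ht₀ (fun x hx => (hball hx).1)
    (by positivity) (fun x hx => (hball hx).2.1.le) hA₀ (fun t ht x hx => (hball hx).2.2 t ht)
    (lt_add_one _) hηA hβ.le hβr hβT ht (mem_closedBall_iff_norm.2 (hx.le.trans (by linarith)))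
  exact hlt.le.trans (barrier_le_of_norm_sub_le hα.le hA.le hβ hr ht.2.le hx.le)

end TypeIBarrier

section NoBlowup

lemma continuousOn_of_abs_sub_le_mul_rpow {V : E → ℝ} {S : Set E} {C γ : ℝ} (hγ : 0 < γ)
    (hV : ∀ x ∈ S, ∀ y ∈ S, |V x - V y| ≤ C * ‖x - y‖ ^ γ) : ContinuousOn V S := by
  intro x hx
  refine tendsto_iff_dist_tendsto_zero.2 (squeeze_zero' (.of_forall fun _ => dist_nonneg)
    (eventually_mem_nhdsWithin.mono fun y hy => hV y hy x hx) ?_)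
  have hcont : Continuous fun y => C * ‖y - x‖ ^ γ :=
    continuous_const.mul (Continuous.rpow_const (by fun_prop) fun _ => .inr hγ.le)
  have hlim := hcont.tendsto x
  rw [sub_self, norm_zero, Real.zero_rpow hγ.ne', mul_zero] at hlim
  exact hlim.mono_left nhdsWithin_le_nhds

variable [InnerProductSpace ℝ E] [FiniteDimensional ℝ E] {Ω : Set E} {V : E → ℝ} {u : ℝ → E → ℝ}
  {f g : ℝ → ℝ} {p q ε K s₀ t₀ t₁ T : ℝ} {x₀ x₁ : E}

lemma IsMonotoneSolution.exists_rate_of_mul_le_deriv (hu : IsMonotoneSolution Ω T V f u)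
    (hp : 1 < p) (hpow : HasPowerGrowth f g p q K s₀) (hε : 0 < ε) (ht₀ : t₀ ∈ Ioo 0 T) :
    ∃ A₀ > 0, ∀ x ∈ Ω, (∀ t ∈ Ico t₀ T, ε * f (u t x) ≤ deriv (fun s => u s x) t) →
      ∀ t ∈ Ico t₀ T, u t x ≤ A₀ * (T - t) ^ (-(1 / (p - 1))) := by
  have hs₀ : 0 < s₀ := one_pos.trans_le hpow.one_le
  have hT : 0 < T := ht₀.1.trans ht₀.2
  have hsub : Ico t₀ T ⊆ Ioo 0 T := fun t ht => ⟨ht₀.1.trans_le ht.1, ht.2⟩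
  refine ⟨max (((p - 1) * (ε / 2)) ^ (-(1 / (p - 1)))) (s₀ * T ^ (1 / (p - 1))),
    lt_max_of_lt_right (by positivity), fun x hx hgrowth t ht => ?_⟩
  refine le_max_mul_rpow_of_mul_rpow_le_deriv (y := fun t => u t x) ((hu.monotoneOn hx).mono hsub)
    hp (half_pos hε) hs₀ ht₀.1.le
    (fun r hr => (hu.differentiableAt r (hsub hr) x hx).hasDerivAt) (fun r hr hs => ?_) ht
  calc ε / 2 * u r x ^ p = ε * (u r x ^ p / 2) := by ring
    _ ≤ ε * f (u r x) := mul_le_mul_of_nonneg_left (hpow.half_rpow_le _ hs) hε.le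
    _ ≤ deriv (fun s => u s x) r := hgrowth r hr

lemma IsMonotoneSolution.exists_uniformGrowthOn (hu : IsMonotoneSolution Ω T V f u)
    (hΩ : IsOpen Ω) (hconn : IsPreconnected Ω) (hbdd : Bornology.IsBounded Ω)
    (hV : ContinuousOn V (closure Ω)) (hV_nonneg : ∀ x ∈ closure Ω, 0 ≤ V x)
    (hf : ContinuousOn f (Ici 0)) (hg : IsSubgradientOn (Ici 0) f g) (ht₁ : t₁ ∈ Ioo 0 T)
    (hx₁ : x₁ ∈ Ω) (hpos : 0 < deriv (fun s => u s x₁) t₁) (ht₀ : t₁ < t₀) {S : Set E}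
    (hS : IsCompact S) (hSΩ : S ⊆ Ω) : UniformGrowthOn u T t₀ S := by
  obtain ⟨B, hB⟩ := hbdd.isCompact_closure.bddAbove_image hV
  have hVB : ∀ x ∈ Ω, V x ≤ |B| + 1 := fun x hx =>
    (hB ⟨x, subset_closure hx, rfl⟩).trans ((le_abs_self B).trans (by linarith))
  have hlip : ∀ a b, 0 ≤ a → a ≤ b → -(|g 0| + 1) * (b - a) ≤ f b - f a := fun a b ha hab => by
    linarith [hg.neg_abs_mul_le_sub ha hab]
  exact hu.uniformGrowthOn_of_isCompact (C := (|B| + 1) * (|g 0| + 1)) hΩ hconn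
    (hV.mono subset_closure) hf (by positivity)
    (fun τ hτ => hu.isNonnegSupersolution_timeQuot hΩ (by positivity) hlip
      (fun x hx => hV_nonneg x (subset_closure hx)) hVB hτ) ht₁ hx₁ hpos ht₀ hS hSΩ

lemma IsMonotoneSolution.exists_eventually_mul_le_deriv (hu : IsMonotoneSolution Ω T V f u)
    (hΩ : IsOpen Ω) (hconn : IsPreconnected Ω) (hbdd : Bornology.IsBounded Ω) (hp : 1 < p)
    (hf_nonneg : ∀ s ≥ 0, 0 ≤ f s) (hfc : ContinuousOn f (Ici 0)) (hg : IsSubgradientOn (Ici 0) f g)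
    (hf_lim : Tendsto (fun s : ℝ => s ^ (-p) * f s) atTop (𝓝 1))
    (hV : ContinuousOn V (closure Ω)) (hV_nonneg : ∀ x ∈ closure Ω, 0 ≤ V x) (hx₀ : x₀ ∈ Ω)
    (hVx₀ : V x₀ = 0) (hcomp : connectedComponentIn {x ∈ closure Ω | V x = 0} x₀ ∩ frontier Ω = ∅)
    (ht₁ : t₁ ∈ Ioo 0 T) (hx₁ : x₁ ∈ Ω) (hpos : 0 < deriv (fun s => u s x₁) t₁)
    (ht₀ : t₀ ∈ Ioo t₁ T) :
    ∃ ε > 0, ∀ᶠ x in 𝓝 x₀, ∀ t ∈ Ico t₀ T, ε * f (u t x) ≤ deriv (fun s => u s x) t := by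
  obtain ⟨χ, G, c, hc, hχ⟩ := exists_isAdaptedCutoff hΩ hbdd hV hV_nonneg hx₀ hVx₀ hcomp
  have hx₀χ : x₀ ∈ tsupport χ := subset_tsupport χ (by simp [hχ.eventuallyEq_one.self_of_nhds])
  have hG : 0 ≤ G := (norm_nonneg _).trans (hχ.norm_gradient_le x₀ hx₀χ)
  -- Any exponents with `(p + 1) / 2 < q < q' < p` would do.
  obtain ⟨K, s₀, hpow⟩ :=
    hg.exists_hasPowerGrowth (q := (7 * p + 1) / 8) hf_nonneg hf_lim (by linarith)
  obtain ⟨m, B, hB, habs⟩ := hpow.exists_absorbsCutoff (q := (3 * p + 1) / 4) hfc hf_nonneg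
    (by linarith) (by linarith) (by linarith) (by linarith) hc hG
  obtain ⟨ε, hε, hgrowth⟩ := hu.exists_forall_mul_le_deriv hΩ hfc hf_nonneg hg
    (fun x hx => hV_nonneg x (subset_closure hx)) hχ habs hB (by linarith) hc
    ⟨ht₁.1.trans ht₀.1, ht₀.2⟩ (hu.exists_uniformGrowthOn hΩ hconn hbdd hV hV_nonneg hfc hg ht₁
      hx₁ hpos ht₀.1 hχ.isCompact_tsupport hχ.tsupport_subset)
  exact ⟨ε, hε, hχ.eventuallyEq_one.mono fun x hx => hgrowth x hx⟩

lemma IsMonotoneSolution.exists_forall_Ico_le_of_deriv_pos (hu : IsMonotoneSolution Ω T V f u)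
    (hΩ : IsOpen Ω) (hconn : IsPreconnected Ω) (hbdd : Bornology.IsBounded Ω) (hp : 1 < p)
    (hf_nonneg : ∀ s ≥ 0, 0 ≤ f s) (hf_conv : ConvexOn ℝ (Ici 0) f)
    (hf_diff : DifferentiableOn ℝ f (Ici 0))
    (hf_lim : Tendsto (fun s : ℝ => s ^ (-p) * f s) atTop (𝓝 1))
    (hV : ContinuousOn V (closure Ω)) (hV_nonneg : ∀ x ∈ closure Ω, 0 ≤ V x) (hx₀ : x₀ ∈ Ω)
    (hVx₀ : V x₀ = 0) (hcomp : connectedComponentIn {x ∈ closure Ω | V x = 0} x₀ ∩ frontier Ω = ∅)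
    (ht₁ : t₁ ∈ Ioo 0 T) (hx₁ : x₁ ∈ Ω) (hpos : 0 < deriv (fun s => u s x₁) t₁)
    (ht₀ : t₀ ∈ Ioo t₁ T) :
    ∃ r > 0, ∃ M > 0, ∀ t ∈ Ico t₀ T, ∀ x, ‖x - x₀‖ < r → u t x ≤ M := by
  have ht₀' : t₀ ∈ Ioo 0 T := ⟨ht₁.1.trans ht₀.1, ht₀.2⟩
  have hfc := hf_diff.continuousOn
  have hg := isSubgradientOn_derivWithin hf_conv hf_diff
  obtain ⟨ε, hε, hgrowth⟩ := hu.exists_eventually_mul_le_deriv hΩ hconn hbdd hp hf_nonneg hfc hg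
    hf_lim hV hV_nonneg hx₀ hVx₀ hcomp ht₁ hx₁ hpos ht₀
  obtain ⟨K, s₀, hpow⟩ := hg.exists_hasPowerGrowth hf_nonneg hf_lim hp
  obtain ⟨A₀, hA₀, hrate⟩ := hu.exists_rate_of_mul_le_deriv hp hpow hε ht₀'
  obtain ⟨C, hC, hfC⟩ := exists_forall_le_mul_one_add_rpow hfc hf_lim
  have hp1 : 0 < p - 1 := sub_pos.2 hp
  refine hu.exists_forall_le_of_le_rate hΩ (one_div_pos.2 hp1) (by field_simp; ring) hC hf_nonneg
    hfC ht₀' hx₀ ((hV.mono subset_closure).continuousAt (hΩ.mem_nhds hx₀)) hVx₀ hA₀.le ?_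
  filter_upwards [hgrowth, hΩ.eventually_mem hx₀] with x hx hxΩ
  exact hrate x hxΩ hx

lemma IsMonotoneSolution.exists_forall_Ico_le_of_deriv_nonpos (hu : IsMonotoneSolution Ω T V f u)
    (hΩ : IsOpen Ω) (hx₀ : x₀ ∈ Ω) (ht₀ : t₀ ∈ Ioo 0 T)
    (hderiv : ∀ t ∈ Ioo 0 T, ∀ x ∈ Ω, deriv (fun s => u s x) t ≤ 0) :
    ∃ r > 0, ∃ M > 0, ∀ t ∈ Ico t₀ T, ∀ x, ‖x - x₀‖ < r → u t x ≤ M := by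
  have hlt : ∀ᶠ x in 𝓝 x₀, u t₀ x < u t₀ x₀ + 1 :=
    (hu.contDiffAt t₀ ht₀ x₀ hx₀).continuousAt.eventually_lt_const (lt_add_one _)
  obtain ⟨r, hr, hball⟩ := Metric.eventually_nhds_iff.1 (hlt.and (hΩ.eventually_mem hx₀))
  refine ⟨r, hr, u t₀ x₀ + 1, by linarith [hu.nonneg t₀ ht₀ x₀ hx₀], fun t ht x hx => ?_⟩
  obtain ⟨hux, hxΩ⟩ := hball (dist_eq_norm x x₀ ▸ hx)
  have hanti : AntitoneOn (fun t => u t x) (Ioo 0 T) :=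
    antitoneOn_of_deriv_nonpos (convex_Ioo 0 T)
      (fun t ht => (hu.differentiableAt t ht x hxΩ).continuousAt.continuousWithinAt)
      (fun t ht =>
        (hu.differentiableAt t (interior_subset ht) x hxΩ).differentiableWithinAt)
      fun t ht => hderiv t (interior_subset ht) x hxΩ
  exact (hanti ht₀ ⟨ht₀.1.trans_le ht.1, ht.2⟩ ht.1).trans hux.le

lemma IsMonotoneSolution.forall_Ioo_le_of_forall_Ico_le (hu : IsMonotoneSolution Ω T V f u)
    (ht₀ : t₀ ∈ Ioo 0 T)
    (h : ∃ r > 0, ∃ M > 0, ∀ t ∈ Ico t₀ T, ∀ x, ‖x - x₀‖ < r → u t x ≤ M) :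
    ∃ r > 0, ∃ M > 0, ∀ t ∈ Ioo 0 T, ∀ x ∈ Ω, ‖x - x₀‖ < r → u t x ≤ M := by
  obtain ⟨r, hr, M, hM, h⟩ := h
  refine ⟨r, hr, M, hM, fun t ht x hx hxr => ?_⟩
  have hmax : max t t₀ ∈ Ioo 0 T := ⟨lt_max_of_lt_left ht.1, max_lt ht.2 ht₀.2⟩
  exact (hu.monotoneOn hx ht hmax (le_max_left t t₀)).trans
    (h _ ⟨le_max_right t t₀, hmax.2⟩ x hxr)

theorem stmt0_general (hΩ : IsOpen Ω) (hconn : IsPreconnected Ω) (hbdd : Bornology.IsBounded Ω)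
    (hp : 1 < p) (hf_nonneg : ∀ s ≥ 0, 0 ≤ f s) (hf_conv : ConvexOn ℝ (Ici 0) f)
    (hf_diff : DifferentiableOn ℝ f (Ici 0))
    (hf_lim : Tendsto (fun s : ℝ => s ^ (-p) * f s) atTop (𝓝 1))
    (hV : ContinuousOn V (closure Ω)) (hV_nonneg : ∀ x ∈ closure Ω, 0 ≤ V x) (hT : 0 < T)
    (hu : IsMonotoneSolution Ω T V f u) (hx₀ : x₀ ∈ Ω) (hVx₀ : V x₀ = 0)
    (hcomp : connectedComponentIn {x ∈ closure Ω | V x = 0} x₀ ∩ frontier Ω = ∅) :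
    ∃ r > 0, ∃ M > 0, ∀ t ∈ Ioo 0 T, ∀ x ∈ Ω, ‖x - x₀‖ < r → u t x ≤ M := by
  by_cases hpos : ∃ t₁ ∈ Ioo 0 T, ∃ x₁ ∈ Ω, 0 < deriv (fun s => u s x₁) t₁
  · obtain ⟨t₁, ht₁, x₁, hx₁, hpos⟩ := hpos
    obtain ⟨t₀, ht₀⟩ := exists_between ht₁.2
    exact hu.forall_Ioo_le_of_forall_Ico_le ⟨ht₁.1.trans ht₀.1, ht₀.2⟩
      (hu.exists_forall_Ico_le_of_deriv_pos hΩ hconn hbdd hp hf_nonneg hf_conv hf_diff hf_lim hV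
        hV_nonneg hx₀ hVx₀ hcomp ht₁ hx₁ hpos ht₀)
  · push Not at hpos
    have ht₀ : T / 2 ∈ Ioo 0 T := ⟨half_pos hT, half_lt_self hT⟩
    exact hu.forall_Ioo_le_of_forall_Ico_le ht₀
      (hu.exists_forall_Ico_le_of_deriv_nonpos hΩ hx₀ ht₀ hpos)

end NoBlowup

end

theorem stmt0
    (n : ℕ) (hn : 1 ≤ n)
    (Ω : Set (EuclideanSpace ℝ (Fin n)))
    (hΩ_open : IsOpen Ω) (hΩ_conn : IsConnected Ω) (hΩ_bdd : Bornology.IsBounded Ω)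
    (p : ℝ) (hp : 1 < p)
    (hpS : 3 ≤ n → p < ((n : ℝ) + 2) / ((n : ℝ) - 2))
    (f : ℝ → ℝ)
    (hf_nonneg : ∀ s ≥ (0:ℝ), 0 ≤ f s)
    (hf_C1 : ContDiffOn ℝ 1 f (Ici 0))
    (hf_C2 : ContDiffOn ℝ 2 f (Ici 0))
    (hf_conv : ConvexOn ℝ (Ici 0) f)
    (hf_lim : Tendsto (fun s : ℝ => s ^ (-p) * f s) atTop (nhds 1))
    (hf_deriv : ∃ C₀ > 0, ∀ s ≥ (0:ℝ), |deriv f s| ≤ C₀ * (1 + s ^ (p - 1)))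
    (V : EuclideanSpace ℝ (Fin n) → ℝ)
    (hV_nonneg : ∀ x ∈ closure Ω, 0 ≤ V x)
    (hV_holder : ∃ C β : ℝ, 0 < β ∧ β ≤ 1 ∧ 0 ≤ C ∧
      ∀ x ∈ closure Ω, ∀ y ∈ closure Ω, |V x - V y| ≤ C * ‖x - y‖ ^ β)
    (T : ℝ) (hT : 0 < T)
    (u : ℝ → EuclideanSpace ℝ (Fin n) → ℝ)
    (hu_nonneg : ∀ t ∈ Ioo 0 T, ∀ x ∈ Ω, 0 ≤ u t x)
    (hu_t : ∀ t ∈ Ioo 0 T, ∀ x ∈ Ω, DifferentiableAt ℝ (fun s => u s x) t)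
    (hu_x : ∀ t ∈ Ioo 0 T, ∀ x ∈ Ω, ContDiffAt ℝ 2 (fun y => u t y) x)
    (heq : ∀ t ∈ Ioo 0 T, ∀ x ∈ Ω,
      deriv (fun s => u s x) t = lap (fun y => u t y) x + V x * f (u t x))
    (hmono : ∀ t ∈ Ioo 0 T, ∀ x ∈ Ω, 0 ≤ deriv (fun s => u s x) t)
    (x₀ : EuclideanSpace ℝ (Fin n)) (hx₀ : x₀ ∈ Ω) (hVx₀ : V x₀ = 0)
    (hcomp : connectedComponentIn {x ∈ closure Ω | V x = 0} x₀ ∩ frontier Ω = ∅)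
    :
    ∃ r > 0, ∃ M > 0, ∀ t ∈ Ioo (T / 2) T, ∀ x ∈ Ω, ‖x - x₀‖ < r → u t x ≤ M := by
  have hu : IsMonotoneSolution Ω T V f u :=
    { nonneg := hu_nonneg
      differentiableAt := hu_t
      contDiffAt := hu_x
      deriv_eq := fun t ht x hx => lap_eq_laplacian (hu_x t ht x hx) ▸ heq t ht x hx
      deriv_nonneg := hmono }
  obtain ⟨_, _, hγ, _, _, hV⟩ := hV_holder
  obtain ⟨r, hr, M, hM, hle⟩ := stmt0_general hΩ_open hΩ_conn.isPreconnected hΩ_bdd hp hf_nonneg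
    hf_conv (hf_C1.differentiableOn one_ne_zero) hf_lim
    (continuousOn_of_abs_sub_le_mul_rpow hγ hV) hV_nonneg hT hu hx₀ hVx₀ hcomp
  exact ⟨r, hr, M, hM, fun t ht => hle t ⟨(half_pos hT).trans ht.1, ht.2⟩⟩
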